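/- arXiv:1708.02335 — 6 statements merged into one kernel-verified Lean document; each statement's English description precedes it below -/
import Mathlib

section
/- Assume the domain condition (A_θ), that H : closure(θ) × ℝ^N × S^N → ℝ is uniformly continuous and satisfies the degenerate ellipticity and modulus conditions (A_H), and that H satisfies the radial monotonicity condition H(x, l·p, l·A) ≥ H(x,p,A) for all l ≥ 1 and all (x,p,A) ∈ closure(θ) × ℝ^N × S^N. For each λ > 0 let V_λ be a constrained viscosity solution of λV(x) + H(x, DV(x), D²V(x)) = 0 on closure(θ) such that λ·V_λ ∈ Lip_{M0}(closure(θ)) for a constant M0 > 0 independent of λ. Then for every x ∈ closure(θ) the map λ ↦ λ·V_λ(x) is nondecreasing on (0,∞). -/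
/-!
The block condition, as stated, compares `H(y,p,B)` (not `H(y,p,-B)`) with `H(x,p,A)`. Given a
symmetric `A`, the pair `(A, -c I)` satisfies the block inequality with `3/ε = c` as soon as `c` is
large; with `x = y` this gives `|H(x,p,-cI) - H(x,p,A)| ≤ ρ 0 = 0`. Hence `H` does not depend on its
matrix argument on symmetric matrices (`H_eq_zero_matrix`), and the equation is of first order.

For `λ ≤ μ` put `u = λ V_λ`, `w = μ V_μ`. By radial monotonicity `u` is a subsolution in `θ` of
`u + H(x, Du/μ, 0) = 0`, of which `w` is a supersolution on `closure θ`. The comparison `u ≤ w` is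
Soner's state-constraint argument: if `σ = u(x₀) - w(x₀) = max (u - w) > 0`, maximize
`u(x) - w(y) - α |x - y - s m(x₀)|² - |y - x₀|²` with `α = 4 M₀ / (r s)`. The Lipschitz bound on
`u` forces `|y - x₀|² = O(s)` and `|x - y - s m(x₀)| ≤ r s / 4`, so that `x` lies in the
ball `B(y + s m(y), r s) ⊆ θ`, where the subsolution property is available. Subtracting the two
viscosity inequalities and letting `s` be small contradicts `σ > 0` by uniform continuity of `H`.
-/

noncomputable section
open Set Filter

/-- The Hessian matrix of `φ : ℝ^N → ℝ` at `x`. -/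
def hessMat {N : ℕ} (φ : EuclideanSpace ℝ (Fin N) → ℝ) (x : EuclideanSpace ℝ (Fin N)) :
    Matrix (Fin N) (Fin N) ℝ :=
  fun i j => iteratedFDeriv ℝ 2 φ x ![EuclideanSpace.single i 1, EuclideanSpace.single j 1]

/-- Frobenius (Euclidean) norm of a real square matrix. -/
def mfroSq {N : ℕ} (A : Matrix (Fin N) (Fin N) ℝ) : ℝ :=
  Real.sqrt (∑ i, ∑ j, (A i j) ^ 2)

/-- The block matrix inequality `-(3/ε)·diag(I,I) ≤ diag(A,B) ≤ (3/ε)·[[I,-I],[-I,I]]`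
(in the positive semidefinite order on symmetric `2N × 2N` matrices). -/
def BlockIneq {N : ℕ} (ε : ℝ) (A B : Matrix (Fin N) (Fin N) ℝ) : Prop :=
  (Matrix.fromBlocks A 0 0 B
      + (3 / ε) • (1 : Matrix (Fin N ⊕ Fin N) (Fin N ⊕ Fin N) ℝ)).PosSemidef ∧
  ((3 / ε) • Matrix.fromBlocks (1 : Matrix (Fin N) (Fin N) ℝ) (-1) (-1) 1
      - Matrix.fromBlocks A 0 0 B).PosSemidef

/-- `V` is a constrained viscosity solution of `λ V + H(x, DV, D²V) = 0` on `closure θ`: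
it is continuous, a viscosity subsolution on `θ` and a viscosity supersolution on
`closure θ`. -/
def ConstrainedSol {N : ℕ} (θ : Set (EuclideanSpace ℝ (Fin N))) (lam : ℝ)
    (H : EuclideanSpace ℝ (Fin N) → EuclideanSpace ℝ (Fin N) →
      Matrix (Fin N) (Fin N) ℝ → ℝ)
    (V : EuclideanSpace ℝ (Fin N) → ℝ) : Prop :=
  ContinuousOn V (closure θ) ∧
  (∀ x ∈ θ, ∀ φ : EuclideanSpace ℝ (Fin N) → ℝ, ContDiff ℝ 2 φ →
    IsLocalMaxOn (fun y => V y - φ y) θ x →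
    lam * V x + H x (gradient φ x) (hessMat φ x) ≤ 0) ∧
  (∀ x ∈ closure θ, ∀ φ : EuclideanSpace ℝ (Fin N) → ℝ, ContDiff ℝ 2 φ →
    IsLocalMinOn (fun y => V y - φ y) (closure θ) x →
    0 ≤ lam * V x + H x (gradient φ x) (hessMat φ x))

/-! ### Independence of the matrix argument -/

lemma hessMat_isSymm {N : ℕ} {φ : EuclideanSpace ℝ (Fin N) → ℝ} (hφ : ContDiff ℝ 2 φ)
    (x : EuclideanSpace ℝ (Fin N)) : (hessMat φ x).IsSymm := by
  have h : IsSymmSndFDerivAt ℝ φ x := hφ.contDiffAt.isSymmSndFDerivAt (by simp)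
  ext i j
  simp only [Matrix.transpose_apply, hessMat, iteratedFDeriv_two_apply]
  exact h _ _

lemma abs_quadForm_le {N : ℕ} (A : Matrix (Fin N) (Fin N) ℝ) (v : Fin N → ℝ) :
    |v ⬝ᵥ A.mulVec v| ≤ (∑ i, ∑ j, |A i j|) * (v ⬝ᵥ v) := by
  have hv : ∀ i, v i ^ 2 ≤ v ⬝ᵥ v := fun i => by
    simp only [dotProduct, ← pow_two]
    exact Finset.single_le_sum (f := fun i => v i ^ 2) (fun j _ => sq_nonneg _) (Finset.mem_univ i)
  have : v ⬝ᵥ A.mulVec v = ∑ i, ∑ j, v i * (A i j * v j) := by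
    simp [dotProduct, Matrix.mulVec, Finset.mul_sum]
  rw [this, Finset.sum_mul]
  refine (Finset.abs_sum_le_sum_abs _ _).trans (Finset.sum_le_sum fun i _ => ?_)
  rw [Finset.sum_mul]
  refine (Finset.abs_sum_le_sum_abs _ _).trans (Finset.sum_le_sum fun j _ => ?_)
  rw [show v i * (A i j * v j) = A i j * (v i * v j) by ring, abs_mul]
  refine mul_le_mul_of_nonneg_left ?_ (abs_nonneg _)
  have h1 := hv i
  have h2 := hv j
  rw [abs_le]
  constructor <;> nlinarith [sq_nonneg (v i + v j), sq_nonneg (v i - v j)]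

/-- For `c` large compared with `A`, the pair `(A, -c I)` satisfies the block inequality with
`3/ε = c`: the upper bound amounts to `(c/2) |v - 2w|² ≥ 0`. -/
lemma blockIneq_neg {N : ℕ} {A : Matrix (Fin N) (Fin N) ℝ} (hA : A.IsSymm) {c : ℝ}
    (hc : 0 < c) (hcA : 2 * (∑ i, ∑ j, |A i j|) ≤ c) :
    BlockIneq (3 / c) A (-(c • (1 : Matrix (Fin N) (Fin N) ℝ))) := by
  have h3 : 3 / (3 / c) = c := by field_simp
  have hAt : A.transpose = A := hA
  have hvv : ∀ v : Fin N → ℝ, 0 ≤ v ⬝ᵥ v := fun v => by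
    simp only [dotProduct, ← pow_two]; exact Finset.sum_nonneg fun _ _ => sq_nonneg _
  unfold BlockIneq
  rw [h3]
  constructor
  · refine Matrix.PosSemidef.of_dotProduct_mulVec_nonneg ?_ ?_
    · unfold Matrix.IsHermitian
      simp [Matrix.fromBlocks_transpose, Matrix.conjTranspose_eq_transpose_of_trivial, hAt,
        Matrix.transpose_smul]
    · intro z
      obtain ⟨v, w, rfl⟩ : ∃ v w : Fin N → ℝ, z = Sum.elim v w :=
        ⟨z ∘ Sum.inl, z ∘ Sum.inr, by simp⟩
      have := abs_le.1 (abs_quadForm_le A v)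
      have h0 := hvv v
      simp only [star_trivial, Matrix.add_mulVec, Matrix.smul_mulVec, Matrix.one_mulVec,
        Matrix.fromBlocks_mulVec, dotProduct_add, dotProduct_smul, smul_eq_mul,
        Matrix.neg_mulVec, Matrix.zero_mulVec, Sum.elim_comp_inl, Sum.elim_comp_inr,
        sumElim_dotProduct_sumElim, add_zero, zero_add, dotProduct_neg]
      nlinarith
  · refine Matrix.PosSemidef.of_dotProduct_mulVec_nonneg ?_ ?_
    · unfold Matrix.IsHermitian
      simp [Matrix.fromBlocks_transpose, Matrix.conjTranspose_eq_transpose_of_trivial, hAt,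
        Matrix.transpose_smul]
    · intro z
      obtain ⟨v, w, rfl⟩ : ∃ v w : Fin N → ℝ, z = Sum.elim v w :=
        ⟨z ∘ Sum.inl, z ∘ Sum.inr, by simp⟩
      have := abs_le.1 (abs_quadForm_le A v)
      have h0 := hvv v
      have h1 := hvv (v - (2 : ℝ) • w)
      simp only [sub_dotProduct, dotProduct_sub, dotProduct_smul, smul_dotProduct,
        smul_eq_mul, dotProduct_comm w v] at h1
      simp only [star_trivial, Matrix.sub_mulVec, Matrix.smul_mulVec, Matrix.one_mulVec,
        Matrix.fromBlocks_mulVec, dotProduct_add, dotProduct_sub, dotProduct_smul, smul_eq_mul,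
        Matrix.neg_mulVec, Matrix.zero_mulVec, Sum.elim_comp_inl, Sum.elim_comp_inr,
        sumElim_dotProduct_sumElim, add_zero, zero_add, dotProduct_neg,
        dotProduct_comm w v]
      nlinarith

/-- The block condition forces `H x p` to be constant on symmetric matrices: `A` and `0` are both
paired with the same matrix `-c I`. -/
lemma H_eq_zero_matrix {N : ℕ} {θ : Set (EuclideanSpace ℝ (Fin N))}
    {H : EuclideanSpace ℝ (Fin N) → EuclideanSpace ℝ (Fin N) →
      Matrix (Fin N) (Fin N) ℝ → ℝ}
    {ρ : ℝ → ℝ} (hρ_nonneg : ∀ s : ℝ, 0 ≤ s → 0 ≤ ρ s)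
    (hρ_mono : MonotoneOn ρ (Ici 0))
    (hρ0 : Tendsto ρ (nhdsWithin 0 (Ioi 0)) (nhds 0))
    (hAH3 : ∀ ε : ℝ, 0 < ε → ∀ x ∈ closure θ, ∀ y ∈ closure θ,
      ∀ (p : EuclideanSpace ℝ (Fin N)) (A B : Matrix (Fin N) (Fin N) ℝ),
      A.IsSymm → B.IsSymm → BlockIneq ε A B →
      |H y p B - H x p A| ≤ ρ (‖x - y‖ ^ 2 / ε + ‖x - y‖ * (‖p‖ + 1)))
    {x : EuclideanSpace ℝ (Fin N)} (hx : x ∈ closure θ) (p : EuclideanSpace ℝ (Fin N))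
    {A : Matrix (Fin N) (Fin N) ℝ} (hA : A.IsSymm) : H x p A = H x p 0 := by
  have hρz : ρ 0 = 0 := by
    refine le_antisymm (ge_of_tendsto hρ0 ?_) (hρ_nonneg 0 le_rfl)
    filter_upwards [self_mem_nhdsWithin] with s hs
    exact hρ_mono (mem_Ici.2 le_rfl) (mem_Ici.2 (le_of_lt hs)) (le_of_lt hs)
  set S := ∑ i, ∑ j, |A i j| with hS
  have hS0 : 0 ≤ S := Finset.sum_nonneg fun _ _ => Finset.sum_nonneg fun _ _ => abs_nonneg _
  have hc : 0 < 2 * S + 1 := by linarith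
  have key : ∀ A' : Matrix (Fin N) (Fin N) ℝ, A'.IsSymm → 2 * (∑ i, ∑ j, |A' i j|) ≤ 2 * S + 1 →
      H x p A' = H x p (-((2 * S + 1) • (1 : Matrix (Fin N) (Fin N) ℝ))) := by
    intro A' hA' hle
    have := hAH3 (3 / (2 * S + 1)) (by positivity) x hx x hx p A' _ hA'
      (by simp [Matrix.IsSymm, Matrix.transpose_smul]) (blockIneq_neg hA' hc hle)
    simp only [sub_self, norm_zero, zero_mul, add_zero] at this
    norm_num [hρz] at this
    linarith
  rw [key A hA (by linarith), key 0 (by simp [Matrix.IsSymm]) (by simp; linarith)]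

/-! ### Quadratic test functions -/

/-- The quadratic test function `y ↦ c |y - a|² + d |y - b|²`; both penalty terms of the doubling
argument, divided by `lam` or by `-mu`, have this form. -/
def quadTest {N : ℕ} (c d : ℝ) (a b : EuclideanSpace ℝ (Fin N)) :
    EuclideanSpace ℝ (Fin N) → ℝ :=
  fun y => c * ‖y - a‖ ^ 2 + d * ‖y - b‖ ^ 2

lemma quadTest_contDiff {N : ℕ} (c d : ℝ) (a b : EuclideanSpace ℝ (Fin N)) :
    ContDiff ℝ 2 (quadTest c d a b) := by
  unfold quadTest
  exact (contDiff_const.mul ((contDiff_id.sub contDiff_const).norm_sq ℝ)).add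
    (contDiff_const.mul ((contDiff_id.sub contDiff_const).norm_sq ℝ))

lemma quadTest_gradient {N : ℕ} (c d : ℝ) (a b x : EuclideanSpace ℝ (Fin N)) :
    gradient (quadTest c d a b) x = (2 * c) • (x - a) + (2 * d) • (x - b) := by
  apply HasGradientAt.gradient
  rw [hasGradientAt_iff_hasFDerivAt]
  have h : ∀ a : EuclideanSpace ℝ (Fin N), HasFDerivAt (fun y => ‖y - a‖ ^ 2)
      (2 • (innerSL ℝ (x - a))) x := fun a => by
    simpa using ((hasFDerivAt_id x).sub_const a).norm_sq
  have hL : InnerProductSpace.toDual ℝ _ ((2 * c) • (x - a) + (2 * d) • (x - b)) =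
      c • (2 • innerSL ℝ (x - a)) + d • (2 • innerSL ℝ (x - b)) := by
    ext v
    simp
    ring
  rw [hL]
  exact ((h a).const_mul c).add ((h b).const_mul d)

/-! ### Comparison -/

/- STATEMENT 5: under (A_θ), (A_H), radial monotonicity of `H`, and uniform
`Lip_{M0}` bounds on `λ·V_λ`, where each `V_λ` is a constrained viscosity solution of
`λV + H(x,DV,D²V) = 0` on `closure θ`, the map `λ ↦ λ·V_λ(x)` is nondecreasing on
`(0,∞)` for every `x ∈ closure θ`. -/
set_option maxHeartbeats 1000000 in
theorem lamVlam_monotone {N : ℕ} (θ : Set (EuclideanSpace ℝ (Fin N)))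
    (hθne : θ.Nonempty) (hθopen : IsOpen θ) (hθbdd : Bornology.IsBounded θ)
    (H : EuclideanSpace ℝ (Fin N) → EuclideanSpace ℝ (Fin N) →
      Matrix (Fin N) (Fin N) ℝ → ℝ)
    (m : EuclideanSpace ℝ (Fin N) → EuclideanSpace ℝ (Fin N)) (r : ℝ) (hr : 0 < r)
    (hm_bd : ∀ x ∈ closure θ, ‖m x‖ ≤ 1)
    (hm_uc : UniformContinuousOn m (closure θ))
    (hm_ball : ∀ x ∈ closure θ, ∀ s ∈ Ioc (0 : ℝ) r,
      Metric.ball (x + s • m x) (r * s) ⊆ θ)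
    (hH_uc : UniformContinuousOn
      (fun q : EuclideanSpace ℝ (Fin N) × EuclideanSpace ℝ (Fin N) ×
        Matrix (Fin N) (Fin N) ℝ => H q.1 q.2.1 q.2.2)
      (closure θ ×ˢ (univ : Set (EuclideanSpace ℝ (Fin N))) ×ˢ
        (univ : Set (Matrix (Fin N) (Fin N) ℝ))))
    (hAH1 : ∀ x ∈ closure θ, ∀ (p : EuclideanSpace ℝ (Fin N))
      (A B : Matrix (Fin N) (Fin N) ℝ), (A - B).PosSemidef → H x p A ≤ H x p B)
    (ρ : ℝ → ℝ) (hρ_nonneg : ∀ s : ℝ, 0 ≤ s → 0 ≤ ρ s)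
    (hρ_mono : MonotoneOn ρ (Ici 0))
    (hρ0 : Tendsto ρ (nhdsWithin 0 (Ioi 0)) (nhds 0))
    (hAH2 : ∀ x ∈ closure θ, ∀ (p q : EuclideanSpace ℝ (Fin N))
      (A B : Matrix (Fin N) (Fin N) ℝ),
      |H x p A - H x q B| ≤ ρ (‖p - q‖ + mfroSq (A - B)))
    (hAH3 : ∀ ε : ℝ, 0 < ε → ∀ x ∈ closure θ, ∀ y ∈ closure θ,
      ∀ (p : EuclideanSpace ℝ (Fin N)) (A B : Matrix (Fin N) (Fin N) ℝ),
      A.IsSymm → B.IsSymm → BlockIneq ε A B →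
      |H y p B - H x p A| ≤ ρ (‖x - y‖ ^ 2 / ε + ‖x - y‖ * (‖p‖ + 1)))
    (hrad : ∀ l : ℝ, 1 ≤ l → ∀ x ∈ closure θ, ∀ (p : EuclideanSpace ℝ (Fin N))
      (A : Matrix (Fin N) (Fin N) ℝ), A.IsSymm → H x p A ≤ H x (l • p) (l • A))
    (M0 : ℝ) (hM0 : 0 < M0)
    (V : ℝ → EuclideanSpace ℝ (Fin N) → ℝ)
    (hVsol : ∀ lam : ℝ, 0 < lam → ConstrainedSol θ lam H (V lam))
    (hVbd : ∀ lam : ℝ, 0 < lam → ∀ x ∈ closure θ, |lam * V lam x| ≤ M0)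
    (hVlip : ∀ lam : ℝ, 0 < lam → ∀ x ∈ closure θ, ∀ y ∈ closure θ,
      |lam * V lam x - lam * V lam y| ≤ M0 * ‖x - y‖)
    :
    ∀ x ∈ closure θ, ∀ lam mu : ℝ, 0 < lam → lam ≤ mu →
      lam * V lam x ≤ mu * V mu x := by
  intro x₁ hx₁ lam mu hlam hle
  have hmu : 0 < mu := hlam.trans_le hle
  have hcpt : IsCompact (closure θ) := hθbdd.isCompact_closure
  have hind := fun {x} (hx : x ∈ closure θ) p {A : Matrix (Fin N) (Fin N) ℝ}
    (hA : A.IsSymm) =>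
    H_eq_zero_matrix hρ_nonneg hρ_mono hρ0 hAH3 hx p hA
  set u : EuclideanSpace ℝ (Fin N) → ℝ := fun x => lam * V lam x with hu
  set w : EuclideanSpace ℝ (Fin N) → ℝ := fun x => mu * V mu x with hw
  have huc : ContinuousOn u (closure θ) := continuousOn_const.mul (hVsol lam hlam).1
  have hwc : ContinuousOn w (closure θ) := continuousOn_const.mul (hVsol mu hmu).1
  have hulip : ∀ x ∈ closure θ, ∀ y ∈ closure θ, u x - u y ≤ M0 * ‖x - y‖ :=
    fun x hx y hy => (le_abs_self _).trans (hVlip lam hlam x hx y hy)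
  obtain ⟨x₀, hx₀, hmax⟩ := hcpt.exists_isMaxOn ⟨x₁, hx₁⟩ (huc.sub hwc)
  have hmax' : ∀ x ∈ closure θ, u x - w x ≤ u x₀ - w x₀ := fun x hx => hmax hx
  by_contra hcon
  obtain ⟨σ, hσ⟩ : ∃ σ, σ = u x₀ - w x₀ := ⟨_, rfl⟩
  have hσpos : 0 < σ := by
    have := hmax' x₁ hx₁
    have h2 : w x₁ < u x₁ := not_le.1 hcon
    linarith
  -- moduli for `H(·,·,0)` and for `m`
  have hG : UniformContinuousOn
      (fun q : EuclideanSpace ℝ (Fin N) × EuclideanSpace ℝ (Fin N) => H q.1 q.2 0)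
      (closure θ ×ˢ univ) := by
    have hf : UniformContinuous
        (fun q : EuclideanSpace ℝ (Fin N) × EuclideanSpace ℝ (Fin N) =>
          (q.1, q.2, (0 : Matrix (Fin N) (Fin N) ℝ))) :=
      uniformContinuous_fst.prodMk (uniformContinuous_snd.prodMk uniformContinuous_const)
    exact hH_uc.comp hf.uniformContinuousOn fun q hq => ⟨hq.1, mem_univ _, mem_univ _⟩
  obtain ⟨η, hη, hGη⟩ := Metric.uniformContinuousOn_iff.1 hG (σ / 2) (by linarith)
  obtain ⟨ζ, hζ, hmζ⟩ := Metric.uniformContinuousOn_iff.1 hm_uc (r / 2) (by linarith)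
  obtain ⟨κ, hκ, hκζ, hκη⟩ : ∃ κ : ℝ, 0 < κ ∧ κ ≤ ζ ∧ κ ≤ mu * η / 2 :=
    ⟨min ζ (mu * η / 2), by positivity, min_le_left _ _, min_le_right _ _⟩
  obtain ⟨s, hs, hsr, hsσ, hsκ, hsη⟩ : ∃ s : ℝ, 0 < s ∧ s ≤ r ∧ M0 * s < σ / 2 ∧
      (2 + r) * M0 * s < κ ^ 2 ∧ (1 + r) * s < η := by
    have ht : ∀ c : ℝ, Tendsto (fun s : ℝ => c * s) (nhdsWithin 0 (Ioi 0)) (nhds 0) := fun c => by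
      have : Tendsto (fun s : ℝ => c * s) (nhds 0) (nhds (c * 0)) :=
        (continuous_const.mul continuous_id).tendsto 0
      rw [mul_zero] at this
      exact this.mono_left nhdsWithin_le_nhds
    have h1 : ∀ᶠ s in nhdsWithin (0 : ℝ) (Ioi 0), 0 < s := self_mem_nhdsWithin
    exact (h1.and (((ht 1).eventually_le_const hr).mono (fun s h => by simpa using h) |>.and
      (((ht M0).eventually_lt_const (by linarith : 0 < σ / 2)).and
      (((ht ((2 + r) * M0)).eventually_lt_const (by positivity : 0 < κ ^ 2)).and
      ((ht (1 + r)).eventually_lt_const hη))))).exists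
  obtain ⟨α, hα⟩ : ∃ α, α = 4 * M0 / (r * s) := ⟨_, rfl⟩
  have hαpos : 0 < α := by rw [hα]; positivity
  have hαs : α * (r * s) = 4 * M0 := by rw [hα]; field_simp
  set m₀ := m x₀ with hm₀
  have hm₀1 : ‖m₀‖ ≤ 1 := hm_bd x₀ hx₀
  have hsm : ‖s • m₀‖ ≤ s := by
    rw [norm_smul, Real.norm_of_nonneg hs.le]; nlinarith
  -- doubling of variables, with the first variable pushed inwards along `m₀`
  have hΦc : ContinuousOn (fun z : EuclideanSpace ℝ (Fin N) × EuclideanSpace ℝ (Fin N) =>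
      u z.1 - w z.2 - α * ‖z.1 - z.2 - s • m₀‖ ^ 2 - ‖z.2 - x₀‖ ^ 2)
      (closure θ ×ˢ closure θ) := by
    refine ((ContinuousOn.sub ?_ ?_).sub (by fun_prop)).sub (by fun_prop)
    · exact huc.comp continuousOn_fst fun z hz => hz.1
    · exact hwc.comp continuousOn_snd fun z hz => hz.2
  obtain ⟨⟨x, y⟩, ⟨hx, hy⟩, hΦ⟩ :=
    (hcpt.prod hcpt).exists_isMaxOn ⟨(x₁, x₁), hx₁, hx₁⟩ hΦc
  simp only at hx hy
  have hΦ' : ∀ x' ∈ closure θ, ∀ y' ∈ closure θ,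
      u x' - w y' - α * ‖x' - y' - s • m₀‖ ^ 2 - ‖y' - x₀‖ ^ 2
        ≤ u x - w y - α * ‖x - y - s • m₀‖ ^ 2 - ‖y - x₀‖ ^ 2 :=
    fun x' hx' y' hy' => hΦ (show (x', y') ∈ closure θ ×ˢ closure θ from ⟨hx', hy'⟩)
  obtain ⟨d, hd⟩ : ∃ d, d = ‖x - y - s • m₀‖ := ⟨_, rfl⟩
  have hd0 : 0 ≤ d := hd ▸ norm_nonneg _
  have hxy : ‖x - y‖ ≤ d + s := by
    have : x - y = (x - y - s • m₀) + s • m₀ := by abel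
    rw [this]
    exact (norm_add_le _ _).trans (by rw [hd]; linarith)
  -- comparison with the competitor `(x₀ + s m₀, x₀)`
  have hin : x₀ + s • m₀ ∈ closure θ :=
    subset_closure (hm_ball x₀ hx₀ s ⟨hs, hsr⟩ (Metric.mem_ball_self (by positivity)))
  have hlow : σ - M0 * s ≤ u x - w y - α * d ^ 2 - ‖y - x₀‖ ^ 2 := by
    have h1 := hΦ' _ hin x₀ hx₀
    have h2 := hulip x₀ hx₀ _ hin
    have h3 : x₀ - (x₀ + s • m₀) = -(s • m₀) := by abel
    have h4 : x₀ + s • m₀ - x₀ - s • m₀ = 0 := by abel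
    rw [h3, norm_neg] at h2
    rw [h4, sub_self, norm_zero, ← hd] at h1
    nlinarith
  have hyx : ‖y - x₀‖ ^ 2 < κ ^ 2 := by
    have h1 := hmax' y hy
    have h2 := hulip x hx y hy
    have h3 : M0 * d - α * d ^ 2 ≤ M0 * (r * s) := by
      by_cases hds : d ≤ r * s
      · nlinarith [mul_le_mul_of_nonneg_left hds hM0.le, mul_nonneg hαpos.le (sq_nonneg d)]
      · have : α * (r * s) * d ≤ α * d * d := by
          have := mul_le_mul_of_nonneg_left (not_le.1 hds).le (mul_nonneg hαpos.le hd0)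
          linarith
        rw [hαs] at this
        have h5 : 0 ≤ M0 * d := by positivity
        have h6 : 0 ≤ M0 * (r * s) := by positivity
        nlinarith
    have h4 := mul_le_mul_of_nonneg_left hxy hM0.le
    nlinarith
  have hyκ : ‖y - x₀‖ < κ := lt_of_pow_lt_pow_left₀ 2 hκ.le hyx
  have hmy : ‖m y - m₀‖ < r / 2 := by
    rw [← dist_eq_norm]
    exact hmζ y hy x₀ hx₀ (by rw [dist_eq_norm]; linarith)
  -- comparison with the competitor `(y + s m₀, y)`
  have hin' : y + s • m₀ ∈ closure θ := by
    refine subset_closure (hm_ball y hy s ⟨hs, hsr⟩ ?_)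
    rw [Metric.mem_ball, dist_eq_norm, show y + s • m₀ - (y + s • m y) = -(s • (m y - m₀)) by
      rw [smul_sub]; abel, norm_neg, norm_smul, Real.norm_of_nonneg hs.le]
    nlinarith
  have hds : d ≤ r * s / 4 := by
    have h1 := hΦ' _ hin' y hy
    have h2 := hulip x hx _ hin'
    rw [show x - (y + s • m₀) = x - y - s • m₀ by abel, ← hd] at h2
    rw [show y + s • m₀ - y - s • m₀ = 0 by abel, norm_zero, ← hd] at h1
    have h3 : α * d * d ≤ M0 * d := by nlinarith
    rcases hd0.eq_or_lt with h | h
    · rw [← h]; positivity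
    · have h4 : α * d ≤ M0 := le_of_mul_le_mul_right h3 h
      have h5 : α * d ≤ α * (r * s / 4) := by linarith
      exact le_of_mul_le_mul_left h5 hαpos
  have hxθ : x ∈ θ := by
    refine hm_ball y hy s ⟨hs, hsr⟩ ?_
    rw [Metric.mem_ball, dist_eq_norm, show x - (y + s • m y) =
      (x - y - s • m₀) - s • (m y - m₀) by rw [smul_sub]; abel]
    refine (norm_sub_le _ _).trans_lt ?_
    rw [norm_smul, Real.norm_of_nonneg hs.le, ← hd]
    have := mul_lt_mul_of_pos_left hmy hs
    have : 0 < r * s := by positivity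
    nlinarith
  -- the viscosity inequality at `x`
  have hsub := (hVsol lam hlam).2.1 x hxθ (quadTest (α / lam) 0 (y + s • m₀) 0)
    (quadTest_contDiff _ _ _ _) (by
      refine Filter.eventually_of_mem self_mem_nhdsWithin fun z hz => ?_
      have h1 := hΦ' z (subset_closure hz) y hy
      simp only [hu, hw] at h1
      simp only [quadTest, zero_mul, add_zero, ← sub_sub]
      refine le_of_mul_le_mul_left ?_ hlam
      rw [mul_sub, mul_sub, ← mul_assoc, ← mul_assoc, mul_div_cancel₀ _ hlam.ne']
      linarith)
  rw [hind hx _ (hessMat_isSymm (quadTest_contDiff _ _ _ _) _), quadTest_gradient] at hsub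
  have hsup := (hVsol mu hmu).2.2 y hy (quadTest (-(α / mu)) (-(1 / mu)) (x - s • m₀) x₀)
    (quadTest_contDiff _ _ _ _) (by
      refine Filter.eventually_of_mem self_mem_nhdsWithin fun z hz => ?_
      have h1 := hΦ' x hx z hz
      have hsw : ∀ z, ‖x - z - s • m₀‖ = ‖z - (x - s • m₀)‖ := fun z => by
        rw [← norm_neg]; congr 1; abel
      rw [hsw, hsw] at h1
      simp only [hu, hw] at h1
      simp only [quadTest]
      refine le_of_mul_le_mul_left ?_ hmu
      have hid : ∀ v a b : ℝ, mu * (v - (-(α / mu) * a + -(1 / mu) * b)) = mu * v + α * a + b :=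
        fun v a b => by field_simp; ring
      rw [hid, hid]
      linarith)
  rw [hind hy _ (hessMat_isSymm (quadTest_contDiff _ _ _ _) _), quadTest_gradient] at hsup
  -- radial monotonicity replaces `p / lam` by `p / mu`
  have hl : 1 ≤ mu / lam := (one_le_div hlam).2 hle
  have hr1 := hrad (mu / lam) hl x hx ((2 * (α / mu)) • (x - (y + s • m₀))) 0 (by simp [Matrix.IsSymm])
  rw [smul_zero, smul_smul, show mu / lam * (2 * (α / mu)) = 2 * (α / lam) by field_simp] at hr1
  rw [mul_zero, zero_smul, add_zero] at hsub
  have hclose := hGη (y, (2 * -(α / mu)) • (y - (x - s • m₀)) + (2 * -(1 / mu)) • (y - x₀))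
    ⟨hy, mem_univ _⟩ (x, (2 * (α / mu)) • (x - (y + s • m₀))) ⟨hx, mem_univ _⟩ (by
      rw [Prod.dist_eq, max_lt_iff]
      constructor
      · show dist y x < η
        rw [dist_comm, dist_eq_norm]
        have : 0 < r * s := by positivity
        linarith
      · show dist _ _ < η
        rw [dist_eq_norm, show (2 * -(α / mu)) • (y - (x - s • m₀)) + (2 * -(1 / mu)) • (y - x₀)
          - (2 * (α / mu)) • (x - (y + s • m₀)) = (-(2 / mu)) • (y - x₀) by module,
          norm_smul, norm_neg, Real.norm_of_nonneg (by positivity)]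
        rw [div_mul_eq_mul_div, div_lt_iff₀ hmu]
        linarith)
  simp only [Real.dist_eq] at hclose
  have h1 := (abs_lt.1 hclose).2
  have h2 : 0 ≤ α * d ^ 2 := by positivity
  have h3 := sq_nonneg ‖y - x₀‖
  simp only [hu, hw] at hlow
  linarith
end
end

section
/- Assume the domain condition (A_θ), that H : closure(θ) × ℝ^N × S^N → ℝ is uniformly continuous and satisfies the degenerate ellipticity and modulus conditions (A_H), and that H satisfies the radial monotonicity condition H(x, l·p, l·A) ≥ H(x,p,A) for all l ≥ 1 and all (x,p,A) ∈ closure(θ) × ℝ^N × S^N. For each λ > 0 let V_λ be a constrained viscosity solution of λV(x) + H(x, DV(x), D²V(x)) = 0 on closure(θ) such that λ·V_λ ∈ Lip_{M0}(closure(θ)) for a constant M0 > 0 independent of λ. Then there exists a function w₀ : closure(θ) → ℝ such that λ·V_λ(x) → w₀(x) as λ → 0⁺ for every x ∈ closure(θ), and the convergence is uniform on closure(θ). -/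
/-!
The two-sided modulus bound in `(A_H)`, read at `x = y` with `A = c I`, `B = -2c I`, `ε = 1 / c`,
says `H x p (c I) = H x p (-2c I)`. By degenerate ellipticity `H x p` is then constant on the
symmetric matrices between `-2c I` and `c I`, hence on all symmetric matrices
(`hamiltonian_eq_zero_matrix`): the equation is effectively of first order.

The functions `w_λ = λ V_λ` solve `w + H(x, Dw / λ, 0) = 0`. For `0 < λ' ≤ λ`, radial monotonicity
makes `w_λ'` a subsolution of the equation of `w_λ`, so the comparison principle for state-constraint
problems (`comparison`) gives `w_λ' ≤ w_λ`. Thus `λ ↦ w_λ x` is monotone and bounded, so it converges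
as `λ → 0⁺`; the common Lipschitz constant on the compact set `closure θ` upgrades this to uniform
convergence (`tendstoUniformlyOn_of_lipschitz`).

The comparison principle is proved by doubling variables with the shifted penalty
`(k / a) ‖x - y - a m(z)‖²`, where `z` maximizes the difference: the shift along the inward direction
`m(z)`, with `k` large compared to the Lipschitz constant, forces the maximizing `x` into the open
set `θ`, where the subsolution property is available.
-/

noncomputable section
open Set Filter

lemma exists_add_smul_one_posSemidef {N : ℕ} (A : Matrix (Fin N) (Fin N) ℝ) (hA : A.IsSymm) :
    ∃ c : ℝ, 0 < c ∧ ∀ d, c ≤ d → (A + d • (1 : Matrix (Fin N) (Fin N) ℝ)).PosSemidef := by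
  refine ⟨∑ i, ∑ j, |A i j| + 1, by positivity, fun d hd => ?_⟩
  refine Matrix.PosSemidef.of_dotProduct_mulVec_nonneg ?_ fun v => ?_
  · have h1 : A.IsHermitian := by
      rw [Matrix.IsHermitian, Matrix.conjTranspose_eq_transpose_of_trivial]; exact hA
    exact h1.add (by simp [Matrix.IsHermitian])
  · have hS : 0 ≤ ∑ i, v i ^ 2 := by positivity
    have e1 : star v ⬝ᵥ ((A + d • (1 : Matrix (Fin N) (Fin N) ℝ)).mulVec v)
        = ∑ i, ∑ j, A i j * (v i * v j) + d * ∑ i, v i ^ 2 := by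
      rw [Matrix.add_mulVec, dotProduct_add]
      congr 1
      · simp only [dotProduct, Matrix.mulVec, Finset.mul_sum, Pi.star_apply, star_trivial]
        exact Finset.sum_congr rfl fun i _ => Finset.sum_congr rfl fun j _ => by ring
      · simp only [Matrix.smul_mulVec, Matrix.one_mulVec, dotProduct, Finset.mul_sum,
          Pi.star_apply, star_trivial, Pi.smul_apply, smul_eq_mul]
        exact Finset.sum_congr rfl fun i _ => by ring
    have e2 : -((∑ i, ∑ j, |A i j|) * ∑ i, v i ^ 2) ≤ ∑ i, ∑ j, A i j * (v i * v j) := by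
      rw [Finset.sum_mul, ← Finset.sum_neg_distrib]
      refine Finset.sum_le_sum fun i _ => ?_
      rw [Finset.sum_mul, ← Finset.sum_neg_distrib]
      refine Finset.sum_le_sum fun j _ => ?_
      have hi : v i ^ 2 ≤ ∑ i, v i ^ 2 :=
        Finset.single_le_sum (f := fun i => v i ^ 2) (fun _ _ => sq_nonneg _) (Finset.mem_univ i)
      have hj : v j ^ 2 ≤ ∑ i, v i ^ 2 :=
        Finset.single_le_sum (f := fun i => v i ^ 2) (fun _ _ => sq_nonneg _) (Finset.mem_univ j)
      have h3 : |v i * v j| ≤ ∑ i, v i ^ 2 := by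
        rw [abs_le]
        constructor <;> nlinarith [sq_nonneg (v i + v j), sq_nonneg (v i - v j)]
      have h4 := mul_le_mul_of_nonneg_left h3 (abs_nonneg (A i j))
      rw [← abs_mul] at h4
      linarith [neg_abs_le (A i j * (v i * v j))]
    rw [e1]
    nlinarith [mul_le_mul_of_nonneg_right hd hS]

lemma blockIneq_smul_one {N : ℕ} {c : ℝ} (hc : 0 < c) :
    BlockIneq (1 / c) (c • (1 : Matrix (Fin N) (Fin N) ℝ)) ((-(2 * c)) • 1) := by
  have hK : 3 / (1 / c) = 3 * c := by field_simp
  unfold BlockIneq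
  rw [hK]
  have key : ∀ α β γ : ℝ, (∀ s t : ℝ, 0 ≤ α * s ^ 2 + 2 * β * (s * t) + γ * t ^ 2) →
      (Matrix.fromBlocks (α • (1 : Matrix (Fin N) (Fin N) ℝ)) (β • (1 : Matrix (Fin N) (Fin N) ℝ))
        (β • (1 : Matrix (Fin N) (Fin N) ℝ))
        (γ • (1 : Matrix (Fin N) (Fin N) ℝ))).PosSemidef := by
    intro α β γ h
    refine Matrix.PosSemidef.of_dotProduct_mulVec_nonneg ?_ fun v => ?_
    · rw [Matrix.isHermitian_fromBlocks_iff]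
      simp [Matrix.IsHermitian]
    · have : star v ⬝ᵥ ((Matrix.fromBlocks (α • (1 : Matrix (Fin N) (Fin N) ℝ)) (β • (1 : Matrix (Fin N) (Fin N) ℝ))
        (β • (1 : Matrix (Fin N) (Fin N) ℝ))
          (γ • (1 : Matrix (Fin N) (Fin N) ℝ))).mulVec v) = ∑ i, (α * v (Sum.inl i) ^ 2
            + 2 * β * (v (Sum.inl i) * v (Sum.inr i)) + γ * v (Sum.inr i) ^ 2) := by
        simp only [Matrix.fromBlocks_mulVec, dotProduct, Fintype.sum_sum_type, Sum.elim_inl,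
          Sum.elim_inr, Matrix.smul_mulVec, Matrix.one_mulVec, Pi.star_apply, star_trivial,
          Pi.add_apply, Pi.smul_apply, smul_eq_mul, Function.comp_apply]
        rw [← Finset.sum_add_distrib]
        exact Finset.sum_congr rfl fun i _ => by ring
      rw [this]
      exact Finset.sum_nonneg fun i _ => h _ _
  constructor
  · convert key (4 * c) 0 c (fun s t => by nlinarith [sq_nonneg s, sq_nonneg t]) using 1
    rw [← Matrix.fromBlocks_one, Matrix.fromBlocks_smul, Matrix.fromBlocks_add]
    congr 1
    · module
    · simp
    · simp
    · module
  · convert key (2 * c) (-(3 * c)) (5 * c) (fun s t => by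
      have : 2 * c * s ^ 2 + 2 * (-(3 * c)) * (s * t) + 5 * c * t ^ 2
          = c * (2 * (s - 3 / 2 * t) ^ 2 + 1 / 2 * t ^ 2) := by ring
      rw [this]; positivity) using 1
    rw [Matrix.fromBlocks_smul, sub_eq_add_neg, Matrix.fromBlocks_neg, Matrix.fromBlocks_add]
    congr 1
    · module
    · module
    · module
    · module

/-- The absolute value in the structure condition makes `H` blind to its (symmetric) matrix
argument. -/
lemma hamiltonian_eq_zero_matrix {N : ℕ} {θ : Set (EuclideanSpace ℝ (Fin N))}
    {H : EuclideanSpace ℝ (Fin N) → EuclideanSpace ℝ (Fin N) → Matrix (Fin N) (Fin N) ℝ → ℝ}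
    (hAH1 : ∀ x ∈ closure θ, ∀ (p : EuclideanSpace ℝ (Fin N))
      (A B : Matrix (Fin N) (Fin N) ℝ), (A - B).PosSemidef → H x p A ≤ H x p B)
    {ρ : ℝ → ℝ} (hρ_mono : MonotoneOn ρ (Ici 0))
    (hρ0 : Tendsto ρ (nhdsWithin 0 (Ioi 0)) (nhds 0))
    (hAH3 : ∀ ε : ℝ, 0 < ε → ∀ x ∈ closure θ, ∀ y ∈ closure θ,
      ∀ (p : EuclideanSpace ℝ (Fin N)) (A B : Matrix (Fin N) (Fin N) ℝ),
      A.IsSymm → B.IsSymm → BlockIneq ε A B →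
      |H y p B - H x p A| ≤ ρ (‖x - y‖ ^ 2 / ε + ‖x - y‖ * (‖p‖ + 1)))
    {x : EuclideanSpace ℝ (Fin N)} (hx : x ∈ closure θ) (p : EuclideanSpace ℝ (Fin N))
    {A : Matrix (Fin N) (Fin N) ℝ} (hA : A.IsSymm) : H x p A = H x p 0 := by
  have hρz : ρ 0 ≤ 0 := by
    refine ge_of_tendsto hρ0 ?_
    filter_upwards [self_mem_nhdsWithin] with s hs
    exact hρ_mono (mem_Ici.2 le_rfl) (mem_Ici.2 (le_of_lt hs)) (le_of_lt hs)
  have main : ∀ c : ℝ, 0 < c → H x p ((-(2 * c)) • 1) = H x p (c • 1) := by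
    intro c hc
    have h := hAH3 (1 / c) (by positivity) x hx x hx p (c • 1) ((-(2 * c)) • 1)
      (by simp [Matrix.IsSymm]) (by simp [Matrix.IsSymm]) (blockIneq_smul_one hc)
    simp only [sub_self, norm_zero] at h
    have h0 : (0 : ℝ) ^ 2 / (1 / c) + 0 * (‖p‖ + 1) = 0 := by simp
    rw [h0] at h
    have := abs_nonpos_iff.1 (h.trans hρz)
    linarith
  obtain ⟨c1, hc1, h1⟩ := exists_add_smul_one_posSemidef A hA
  obtain ⟨c2, hc2, h2⟩ := exists_add_smul_one_posSemidef (-A)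
    (by simpa [Matrix.IsSymm] using hA)
  set c := max c1 c2
  have hc : 0 < c := lt_max_of_lt_left hc1
  have hone : ∀ d : ℝ, 0 ≤ d → (d • (1 : Matrix (Fin N) (Fin N) ℝ)).PosSemidef :=
    fun d hd => Matrix.PosSemidef.one.smul hd
  have a1 : H x p (c • 1) ≤ H x p A := hAH1 x hx p _ _ (by
    have := h2 c (le_max_right _ _)
    rwa [neg_add_eq_sub] at this)
  have a2 : H x p A ≤ H x p ((-(2 * c)) • 1) := hAH1 x hx p _ _ (by
    have := h1 (2 * c) (by linarith [le_max_left c1 c2])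
    rwa [neg_smul, sub_neg_eq_add])
  have b1 : H x p (c • 1) ≤ H x p 0 := hAH1 x hx p _ _ (by
    rw [sub_zero]; exact hone c hc.le)
  have b2 : H x p 0 ≤ H x p ((-(2 * c)) • 1) := hAH1 x hx p _ _ (by
    rw [neg_smul, sub_neg_eq_add, zero_add]; exact hone (2 * c) (by positivity))
  have := main c hc
  linarith

/-! ### Comparison principle -/

lemma contDiff_penalty {N : ℕ} (α β : ℝ) (b c : EuclideanSpace ℝ (Fin N)) :
    ContDiff ℝ 2 (fun x => α * ‖x - b‖ ^ 2 + β * ‖x - c‖ ^ 2) := by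
  have h : ∀ b : EuclideanSpace ℝ (Fin N), ContDiff ℝ 2 (fun x => ‖x - b‖ ^ 2) :=
    fun b => (contDiff_id.sub contDiff_const).norm_sq ℝ
  exact (contDiff_const.mul (h b)).add (contDiff_const.mul (h c))

lemma gradient_penalty {N : ℕ} (α β : ℝ) (b c x : EuclideanSpace ℝ (Fin N)) :
    gradient (fun x => α * ‖x - b‖ ^ 2 + β * ‖x - c‖ ^ 2) x
      = (2 * α) • (x - b) + (2 * β) • (x - c) := by
  have h : ∀ b : EuclideanSpace ℝ (Fin N), HasFDerivAt (fun x => ‖x - b‖ ^ 2)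
      (2 • (innerSL ℝ (x - b)).comp (ContinuousLinearMap.id ℝ _)) x :=
    fun b => ((hasFDerivAt_id x).sub_const b).norm_sq
  refine HasGradientAt.gradient ?_
  rw [hasGradientAt_iff_hasFDerivAt]
  refine (((h b).const_mul α).add ((h c).const_mul β)).congr_fderiv ?_
  refine ContinuousLinearMap.ext fun v => ?_
  simp [inner_add_left, inner_smul_left, InnerProductSpace.toDual_apply_apply]
  ring

set_option maxHeartbeats 1000000 in
/-- Comparison for `w + h(x, Dw) = 0` with state constraints, for Lipschitz functions. The
sub- and supersolution properties are only needed for the quadratic test functions that occur in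
the doubling of variables. -/
lemma comparison {N : ℕ} {θ : Set (EuclideanSpace ℝ (Fin N))}
    (hθbdd : Bornology.IsBounded θ)
    {m : EuclideanSpace ℝ (Fin N) → EuclideanSpace ℝ (Fin N)} {r : ℝ} (hr : 0 < r)
    (hm_bd : ∀ x ∈ closure θ, ‖m x‖ ≤ 1)
    (hm_uc : UniformContinuousOn m (closure θ))
    (hm_ball : ∀ x ∈ closure θ, ∀ s ∈ Ioc (0 : ℝ) r,
      Metric.ball (x + s • m x) (r * s) ⊆ θ)
    {h : EuclideanSpace ℝ (Fin N) → EuclideanSpace ℝ (Fin N) → ℝ}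
    (hh : ∀ e : ℝ, 0 < e → ∃ δ : ℝ, 0 < δ ∧ ∀ x ∈ closure θ, ∀ y ∈ closure θ,
      ∀ p q : EuclideanSpace ℝ (Fin N), ‖x - y‖ < δ → ‖p - q‖ < δ → |h x p - h y q| < e)
    {L : ℝ} (hL : 0 < L) {u v : EuclideanSpace ℝ (Fin N) → ℝ}
    (hu : ContinuousOn u (closure θ)) (hv : ContinuousOn v (closure θ))
    (hulip : ∀ x ∈ closure θ, ∀ y ∈ closure θ, |u x - u y| ≤ L * ‖x - y‖)
    (hsub : ∀ x ∈ θ, ∀ (α β : ℝ) (b c : EuclideanSpace ℝ (Fin N)),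
      IsMaxOn (fun x => u x - (α * ‖x - b‖ ^ 2 + β * ‖x - c‖ ^ 2)) θ x →
      u x + h x ((2 * α) • (x - b) + (2 * β) • (x - c)) ≤ 0)
    (hsup : ∀ x ∈ closure θ, ∀ (α β : ℝ) (b c : EuclideanSpace ℝ (Fin N)),
      IsMinOn (fun x => v x - (α * ‖x - b‖ ^ 2 + β * ‖x - c‖ ^ 2)) (closure θ) x →
      0 ≤ v x + h x ((2 * α) • (x - b) + (2 * β) • (x - c))) :
    ∀ x ∈ closure θ, u x ≤ v x := by
  intro x0 hx0
  by_contra! hlt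
  have hK : IsCompact (closure θ) := hθbdd.isCompact_closure
  obtain ⟨z, hz, hzmax⟩ := hK.exists_isMaxOn ⟨x0, hx0⟩ (hu.sub hv)
  set σ := u z - v z with hσ
  have hmax : ∀ y ∈ closure θ, u y - v y ≤ σ := fun y hy => hzmax hy
  have hσpos : 0 < σ := by linarith [hmax x0 hx0]
  obtain ⟨δ, hδ, hhδ⟩ := hh (σ / 2) (by positivity)
  obtain ⟨δm, hδm, hmδ⟩ := Metric.uniformContinuousOn_iff.1 hm_uc (r / 2) (by positivity)
  set δ' := min δm (δ / 2) with hδ'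
  have hδ'pos : 0 < δ' := lt_min hδm (by positivity)
  have small : ∀ C D : ℝ, 0 < D → ∀ᶠ a : ℝ in nhdsWithin 0 (Ioi 0), a * C < D := by
    intro C D hD
    have ht : Tendsto (fun a : ℝ => a * C) (nhdsWithin 0 (Ioi 0)) (nhds 0) := by
      have : Tendsto (fun a : ℝ => a * C) (nhds 0) (nhds (0 * C)) :=
        (continuous_id.mul continuous_const).tendsto 0
      rw [zero_mul] at this
      exact this.mono_left nhdsWithin_le_nhds
    exact ht.eventually (gt_mem_nhds hD)
  obtain ⟨a, ha, ha1, ha2, ha3, ha4⟩ :=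
    ((eventually_mem_nhdsWithin : ∀ᶠ a : ℝ in nhdsWithin 0 (Ioi 0), a ∈ Ioi 0).and
      ((small 1 r hr).and ((small (2 * L + L * r / 2) (δ' ^ 2) (by positivity)).and
      ((small (r / 2 + 1) δ hδ).and (small L (σ / 2) (by positivity)))))).exists
  have ha0 : 0 < a := ha
  -- This `k` is large enough for the penalty to force `‖x - y - a m(z)‖ ≤ r a / 2`, uniformly in `a`.
  set k := 2 * (4 * L / r + L) / r with hk
  have hkpos : 0 < k := by positivity
  set M := a • m z with hM
  have hMn : ‖M‖ ≤ a := by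
    rw [hM, norm_smul, Real.norm_of_nonneg ha0.le]
    nlinarith [hm_bd z hz]
  have hcont : ContinuousOn (fun q : EuclideanSpace ℝ (Fin N) × EuclideanSpace ℝ (Fin N) =>
      u q.1 - v q.2 - (k / a * ‖q.1 - q.2 - M‖ ^ 2 + ‖q.2 - z‖ ^ 2))
      (closure θ ×ˢ closure θ) := by
    refine ContinuousOn.sub (ContinuousOn.sub
      (hu.comp continuousOn_fst fun q hq => hq.1) (hv.comp continuousOn_snd fun q hq => hq.2)) ?_
    exact Continuous.continuousOn (by fun_prop)
  obtain ⟨⟨x, y⟩, ⟨hx, hy⟩, hxy⟩ := (hK.prod hK).exists_isMaxOn ⟨(z, z), hz, hz⟩ hcont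
  simp only at hx hy
  have hΨ : ∀ x' ∈ closure θ, ∀ y' ∈ closure θ,
      u x' - v y' - (k / a * ‖x' - y' - M‖ ^ 2 + ‖y' - z‖ ^ 2)
        ≤ u x - v y - (k / a * ‖x - y - M‖ ^ 2 + ‖y - z‖ ^ 2) :=
    fun x' hx' y' hy' => hxy (show (x', y') ∈ closure θ ×ˢ closure θ from ⟨hx', hy'⟩)
  have hzM : z + M ∈ closure θ := subset_closure (hm_ball z hz a ⟨ha0, by linarith⟩
    (Metric.mem_ball_self (by positivity)))
  have hlow : σ - L * a ≤ u x - v y - (k / a * ‖x - y - M‖ ^ 2 + ‖y - z‖ ^ 2) := by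
    have h1 := hΨ (z + M) hzM z hz
    have h2 := (abs_le.1 (hulip (z + M) hzM z hz)).1
    simp only [add_sub_cancel_left, sub_self, norm_zero] at h1 h2
    have h3 := mul_le_mul_of_nonneg_left hMn hL.le
    nlinarith
  set d := ‖x - y - M‖ with hd
  set Y := ‖y - z‖ with hY
  have hd0 : 0 ≤ d := norm_nonneg _
  have hY0 : 0 ≤ Y := norm_nonneg _
  have hxyd : ‖x - y‖ ≤ d + a := by
    have := norm_add_le (x - y - M) M
    rw [sub_add_cancel] at this
    linarith
  have hpen : k / a * d ^ 2 + Y ^ 2 ≤ 2 * L * a + L * d := by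
    have h1 := hmax y hy
    have h2 := (abs_le.1 (hulip x hx y hy)).2
    have h3 := mul_le_mul_of_nonneg_left hxyd hL.le
    nlinarith
  have hda : d ≤ r * a / 2 := by
    by_contra! hcon
    have hdpos : 0 < d := lt_of_le_of_lt (by positivity) hcon
    have hka : k * (r * a / 2) = (4 * L / r + L) * a := by rw [hk]; field_simp
    have h1 : 2 * L * a ≤ 4 * L / r * d := by
      have : 2 * L * a = 4 * L / r * (r * a / 2) := by field_simp; ring
      rw [this]
      exact mul_le_mul_of_nonneg_left hcon.le (by positivity)
    have h2 : k / a * d ^ 2 ≤ (4 * L / r + L) * d := by nlinarith [sq_nonneg Y]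
    have h3 : k * d ≤ (4 * L / r + L) * a := by
      have h4 : (k / a * d) * d ≤ (4 * L / r + L) * d := by nlinarith
      have h5 := le_of_mul_le_mul_right h4 hdpos
      calc k * d = (k / a * d) * a := by field_simp
        _ ≤ _ := mul_le_mul_of_nonneg_right h5 ha0.le
    rw [← hka] at h3
    exact absurd (le_of_mul_le_mul_left h3 hkpos) (not_le.2 hcon)
  have hYδ : Y < δ' := by
    have h1 : 0 ≤ k / a * d ^ 2 := by positivity
    have h2 := mul_le_mul_of_nonneg_left hda hL.le
    exact lt_of_pow_lt_pow_left₀ 2 hδ'pos.le (by nlinarith)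
  have hxθ : x ∈ θ := by
    apply hm_ball y hy a ⟨ha0, by linarith⟩
    have h1 := hmδ z hz y hy (by
      rw [dist_comm, dist_eq_norm]; exact hYδ.trans_le (min_le_left _ _))
    rw [dist_eq_norm] at h1
    rw [Metric.mem_ball, dist_eq_norm]
    have h2 : x - (y + a • m y) = (x - y - M) + a • (m z - m y) := by
      rw [hM]; module
    rw [h2]
    have h3 := norm_add_le (x - y - M) (a • (m z - m y))
    rw [norm_smul, Real.norm_of_nonneg ha0.le] at h3
    nlinarith
  have s1 := hsub x hxθ (k / a) 0 (y + M) 0 (by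
    intro x' hx'
    have := hΨ x' (subset_closure hx') y hy
    simp only [mem_ofPred_eq, ← sub_sub]
    linarith)
  have s2 := hsup y hy (-(k / a)) (-1) (x - M) z (by
    intro y' hy'
    have := hΨ x hx y' hy'
    have e : ∀ y' : EuclideanSpace ℝ (Fin N), ‖y' - (x - M)‖ = ‖x - y' - M‖ := by
      intro y'
      rw [← norm_neg]; congr 1; abel
    simp only [mem_ofPred_eq, e]
    linarith)
  have hdiff := hhδ y hy x hx ((2 * -(k / a)) • (y - (x - M)) + (2 * (-1 : ℝ)) • (y - z))
    ((2 * (k / a)) • (x - (y + M)) + (2 * (0 : ℝ)) • (x - 0)) (by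
      rw [norm_sub_rev]; nlinarith) (by
      have : (2 * -(k / a)) • (y - (x - M)) + (2 * (-1 : ℝ)) • (y - z)
        - ((2 * (k / a)) • (x - (y + M)) + (2 * (0 : ℝ)) • (x - 0)) = (-2 : ℝ) • (y - z) := by
        module
      rw [this, norm_smul]
      have h2 := hYδ.trans_le (min_le_right _ _)
      norm_num
      linarith)
  have h1 := (abs_lt.1 hdiff).2
  have h2 : 0 ≤ k / a * d ^ 2 := by positivity
  nlinarith [sq_nonneg Y]

/-! ### Uniform convergence -/

/-- A pointwise convergent family with a common Lipschitz constant converges uniformly on compact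
sets. -/
lemma tendstoUniformlyOn_of_lipschitz {E : Type*} [NormedAddCommGroup E] {K : Set E}
    (hK : IsCompact K) {M : ℝ} (hM : 0 < M) {l : Filter ℝ} [l.NeBot] {f : ℝ → E → ℝ} {g : E → ℝ}
    (hlip : ∀ᶠ t in l, ∀ x ∈ K, ∀ y ∈ K, |f t x - f t y| ≤ M * ‖x - y‖)
    (hfg : ∀ x ∈ K, Tendsto (fun t => f t x) l (nhds (g x))) : TendstoUniformlyOn f g l K := by
  have hg : ∀ x ∈ K, ∀ y ∈ K, |g x - g y| ≤ M * ‖x - y‖ := by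
    intro x hx y hy
    refine le_of_tendsto ((hfg x hx).sub (hfg y hy)).abs ?_
    filter_upwards [hlip] with t ht using ht x hx y hy
  rw [Metric.tendstoUniformlyOn_iff]
  intro e he
  obtain ⟨T, hTK, hTfin, hcov⟩ := hK.finite_cover_balls (e := e / (4 * M)) (by positivity)
  have hT : ∀ᶠ t in l, ∀ c ∈ T, dist (f t c) (g c) < e / 4 :=
    (hTfin.eventually_all).2 fun c hc =>
      Metric.tendsto_nhds.1 (hfg c (hTK hc)) (e / 4) (by positivity)
  filter_upwards [hT, hlip] with t ht hl x hx
  obtain ⟨c, hcT, hxc⟩ := mem_iUnion₂.1 (hcov hx)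
  rw [Metric.mem_ball, dist_eq_norm] at hxc
  have h0 : M * ‖x - c‖ < e / 4 := by
    have := mul_lt_mul_of_pos_left hxc hM
    have e1 : M * (e / (4 * M)) = e / 4 := by field_simp
    rwa [e1] at this
  have h1 := abs_le.1 (hg x hx c (hTK hcT))
  have h2 := abs_le.1 (hl x hx c (hTK hcT))
  have h3 := ht c hcT
  rw [Real.dist_eq, abs_lt] at h3 ⊢
  constructor <;> linarith [h1.1, h1.2, h2.1, h2.2, h3.1, h3.2]

/- STATEMENT 6: under (A_θ), (A_H), radial monotonicity of `H`, and uniform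
`Lip_{M0}` bounds on `λ·V_λ`, where each `V_λ` is a constrained viscosity solution of
`λV + H(x,DV,D²V) = 0` on `closure θ`, there is a function `w₀` such that
`λ·V_λ → w₀` as `λ → 0⁺`, uniformly on `closure θ` (hence pointwise on `closure θ`). -/
theorem lamVlam_converges_uniformly {N : ℕ} (θ : Set (EuclideanSpace ℝ (Fin N)))
    (hθne : θ.Nonempty) (hθopen : IsOpen θ) (hθbdd : Bornology.IsBounded θ)
    (H : EuclideanSpace ℝ (Fin N) → EuclideanSpace ℝ (Fin N) →
      Matrix (Fin N) (Fin N) ℝ → ℝ)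
    (m : EuclideanSpace ℝ (Fin N) → EuclideanSpace ℝ (Fin N)) (r : ℝ) (hr : 0 < r)
    (hm_bd : ∀ x ∈ closure θ, ‖m x‖ ≤ 1)
    (hm_uc : UniformContinuousOn m (closure θ))
    (hm_ball : ∀ x ∈ closure θ, ∀ s ∈ Ioc (0 : ℝ) r,
      Metric.ball (x + s • m x) (r * s) ⊆ θ)
    (hH_uc : UniformContinuousOn
      (fun q : EuclideanSpace ℝ (Fin N) × EuclideanSpace ℝ (Fin N) ×
        Matrix (Fin N) (Fin N) ℝ => H q.1 q.2.1 q.2.2)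
      (closure θ ×ˢ (univ : Set (EuclideanSpace ℝ (Fin N))) ×ˢ
        (univ : Set (Matrix (Fin N) (Fin N) ℝ))))
    (hAH1 : ∀ x ∈ closure θ, ∀ (p : EuclideanSpace ℝ (Fin N))
      (A B : Matrix (Fin N) (Fin N) ℝ), (A - B).PosSemidef → H x p A ≤ H x p B)
    (ρ : ℝ → ℝ) (hρ_nonneg : ∀ s : ℝ, 0 ≤ s → 0 ≤ ρ s)
    (hρ_mono : MonotoneOn ρ (Ici 0))
    (hρ0 : Tendsto ρ (nhdsWithin 0 (Ioi 0)) (nhds 0))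
    (hAH2 : ∀ x ∈ closure θ, ∀ (p q : EuclideanSpace ℝ (Fin N))
      (A B : Matrix (Fin N) (Fin N) ℝ),
      |H x p A - H x q B| ≤ ρ (‖p - q‖ + mfroSq (A - B)))
    (hAH3 : ∀ ε : ℝ, 0 < ε → ∀ x ∈ closure θ, ∀ y ∈ closure θ,
      ∀ (p : EuclideanSpace ℝ (Fin N)) (A B : Matrix (Fin N) (Fin N) ℝ),
      A.IsSymm → B.IsSymm → BlockIneq ε A B →
      |H y p B - H x p A| ≤ ρ (‖x - y‖ ^ 2 / ε + ‖x - y‖ * (‖p‖ + 1)))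
    (hrad : ∀ l : ℝ, 1 ≤ l → ∀ x ∈ closure θ, ∀ (p : EuclideanSpace ℝ (Fin N))
      (A : Matrix (Fin N) (Fin N) ℝ), A.IsSymm → H x p A ≤ H x (l • p) (l • A))
    (M0 : ℝ) (hM0 : 0 < M0)
    (V : ℝ → EuclideanSpace ℝ (Fin N) → ℝ)
    (hVsol : ∀ lam : ℝ, 0 < lam → ConstrainedSol θ lam H (V lam))
    (hVbd : ∀ lam : ℝ, 0 < lam → ∀ x ∈ closure θ, |lam * V lam x| ≤ M0)
    (hVlip : ∀ lam : ℝ, 0 < lam → ∀ x ∈ closure θ, ∀ y ∈ closure θ,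
      |lam * V lam x - lam * V lam y| ≤ M0 * ‖x - y‖)
    :
    ∃ w0 : EuclideanSpace ℝ (Fin N) → ℝ,
      (∀ x ∈ closure θ, Tendsto (fun lam : ℝ => lam * V lam x)
        (nhdsWithin 0 (Ioi 0)) (nhds (w0 x))) ∧
      TendstoUniformlyOn (fun lam : ℝ => fun x => lam * V lam x) w0
        (nhdsWithin 0 (Ioi 0)) (closure θ) := by
  classical
  have hK : IsCompact (closure θ) := hθbdd.isCompact_closure
  have hH0 : ∀ x ∈ closure θ, ∀ (p : EuclideanSpace ℝ (Fin N)) (A : Matrix (Fin N) (Fin N) ℝ),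
      A.IsSymm → H x p A = H x p 0 := fun x hx p A hA =>
    hamiltonian_eq_zero_matrix hAH1 hρ_mono hρ0 hAH3 hx p hA
  have hHuc : ∀ e : ℝ, 0 < e → ∃ δ : ℝ, 0 < δ ∧ ∀ x ∈ closure θ, ∀ y ∈ closure θ,
      ∀ p q : EuclideanSpace ℝ (Fin N), ‖x - y‖ < δ → ‖p - q‖ < δ →
      |H x p 0 - H y q 0| < e := by
    have h1 : UniformContinuousOn
        (fun q : EuclideanSpace ℝ (Fin N) × EuclideanSpace ℝ (Fin N) => H q.1 q.2 0)
        (closure θ ×ˢ univ) := by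
      have h2 : UniformContinuous
          (fun q : EuclideanSpace ℝ (Fin N) × EuclideanSpace ℝ (Fin N) =>
            (q.1, q.2, (0 : Matrix (Fin N) (Fin N) ℝ))) :=
        uniformContinuous_fst.prodMk (uniformContinuous_snd.prodMk uniformContinuous_const)
      exact hH_uc.comp h2.uniformContinuousOn
        (fun q hq => ⟨hq.1, mem_univ _, mem_univ _⟩)
    intro e he
    obtain ⟨δ, hδ, h3⟩ := Metric.uniformContinuousOn_iff.1 h1 e he
    refine ⟨δ, hδ, fun x hx y hy p q hxy hpq => ?_⟩
    have := h3 (x, p) ⟨hx, mem_univ _⟩ (y, q) ⟨hy, mem_univ _⟩ (by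
      rw [Prod.dist_eq, dist_eq_norm, dist_eq_norm]
      exact max_lt hxy hpq)
    rwa [Real.dist_eq] at this
  have scale : ∀ (lam α β : ℝ) (b c x : EuclideanSpace ℝ (Fin N)),
      (2 * (lam⁻¹ * α)) • (x - b) + (2 * (lam⁻¹ * β)) • (x - c)
        = lam⁻¹ • ((2 * α) • (x - b) + (2 * β) • (x - c)) := by
    intro lam α β b c x
    module
  have hmono : ∀ x ∈ closure θ, MonotoneOn (fun lam : ℝ => lam * V lam x) (Ioi 0) := by
    intro x hx μ hμ lam hlam hle
    have hμ0 : 0 < μ := hμ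
    have hlam0 : 0 < lam := hlam
    obtain ⟨hVc, hVsub, -⟩ := hVsol μ hμ0
    obtain ⟨hWc, -, hWsup⟩ := hVsol lam hlam0
    refine comparison (u := fun x => μ * V μ x) (v := fun x => lam * V lam x)
      (h := fun x p => H x (lam⁻¹ • p) 0) hθbdd hr hm_bd hm_uc hm_ball ?_ hM0
      (continuousOn_const.mul hVc) (continuousOn_const.mul hWc) (hVlip μ hμ0) ?_ ?_ x hx
    · intro e he
      obtain ⟨δ, hδ, h1⟩ := hHuc e he
      refine ⟨min δ (lam * δ), lt_min hδ (by positivity), fun x hx y hy p q hxy hpq => ?_⟩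
      refine h1 x hx y hy _ _ (hxy.trans_le (min_le_left _ _)) ?_
      rw [← smul_sub, norm_smul, Real.norm_of_nonneg (by positivity), inv_mul_lt_iff₀ hlam0]
      exact hpq.trans_le (min_le_right _ _)
    · intro x hx α β b c hmax
      have hxK := subset_closure hx
      have h1 := hVsub x hx _ (contDiff_penalty (μ⁻¹ * α) (μ⁻¹ * β) b c) (by
        refine IsMaxOn.localize fun y hy => ?_
        have h2 := mul_le_mul_of_nonneg_left (hmax hy) (inv_nonneg.2 hμ0.le)
        simp only [mul_sub, inv_mul_cancel_left₀ hμ0.ne', mul_add, ← mul_assoc] at h2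
        exact h2)
      rw [hH0 x hxK _ _ (hessMat_isSymm (contDiff_penalty _ _ b c) x), gradient_penalty,
        scale] at h1
      have h3 := hrad (lam / μ) ((one_le_div hμ0).2 hle) x hxK
        (lam⁻¹ • ((2 * α) • (x - b) + (2 * β) • (x - c))) 0 (by simp [Matrix.IsSymm])
      have h4 : lam / μ * lam⁻¹ = μ⁻¹ := by field_simp
      rw [smul_zero, smul_smul, h4] at h3
      linarith
    · intro x hxK α β b c hmin
      have h1 := hWsup x hxK _ (contDiff_penalty (lam⁻¹ * α) (lam⁻¹ * β) b c) (by
        refine IsMinOn.localize fun y hy => ?_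
        have h2 := mul_le_mul_of_nonneg_left (hmin hy) (inv_nonneg.2 hlam0.le)
        simp only [mul_sub, inv_mul_cancel_left₀ hlam0.ne', mul_add, ← mul_assoc] at h2
        exact h2)
      rwa [hH0 x hxK _ _ (hessMat_isSymm (contDiff_penalty _ _ b c) x), gradient_penalty,
        scale] at h1
  have hlim : ∀ x ∈ closure θ, Tendsto (fun lam : ℝ => lam * V lam x)
      (nhdsWithin 0 (Ioi 0)) (nhds (sInf ((fun lam : ℝ => lam * V lam x) '' Ioi 0))) := by
    intro x hx
    refine (hmono x hx).tendsto_nhdsGT ?_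
    exact ⟨-M0, by rintro _ ⟨lam, hlam, rfl⟩; exact (abs_le.1 (hVbd lam hlam x hx)).1⟩
  refine ⟨_, hlim, tendstoUniformlyOn_of_lipschitz hK hM0 ?_ hlim⟩
  filter_upwards [self_mem_nhdsWithin] with lam hlam using hVlip lam hlam
end
end

section
/- Let H : closure(θ) × ℝ^N × S^N → ℝ be continuous, M0 > 0, and set H̄(x,p,A) := min{ M0, sup_{l>0} H(x, l·p, l·A) }. Let S := { w ∈ Lip_{M0}(closure(θ)) : w + H̄(x, Dw, D²w) ≤ 0 on θ in the viscosity sense } be nonempty, and define w̄(x) := sup{ w(x) : w ∈ S } for x ∈ closure(θ). Then w̄ ∈ Lip_{M0}(closure(θ)) and w̄(x) + H̄(x, Dw̄(x), D²w̄(x)) ≤ 0 on θ in the viscosity sense; in particular w̄ ∈ S (the upper envelope of the family of subsolutions is itself a subsolution, even though H̄ is only lower semicontinuous). -/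
/-!
The envelope inherits the bound and the Lipschitz constant because both pass to pointwise suprema.

For the viscosity inequality let `w̄ - φ` have a local maximum at `z ∈ θ`. For `ε > 0` replace `φ` by
`φ + ε ‖· - z‖²` and pick `w ∈ S` with `w z > w̄ z - ε²`. A maximum point `y` of
`w - φ - ε ‖· - z‖²` over a small closed ball around `z` then satisfies `‖y - z‖² ≤ ε`
(`exists_perturbed_max`), so it is interior when `ε` is small, and the subsolution property of `w`
holds at `y`. By definition of `H̄` as a supremum, it gives
`w y + min M0 (H y (l p) (l A)) ≤ 0` for each fixed `l > 0`, where `p, A` are the derivatives of the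
perturbed test function at `y`. For fixed `l` this expression is continuous, so letting `ε → 0`
yields the inequality at `z` with `p = Dφ z`, `A = D²φ z`; taking the supremum over `l` concludes.
Only the lower semicontinuity of `H̄`, as a supremum of continuous functions, matters here.
-/

noncomputable section
open Set Filter

/-- `hbar H M0 x p A = min { M0, sup_{l>0} H(x, l•p, l•A) }`.
(Phrased as `⨆_{l>0} min M0 (H (x, l•p, l•A))`, which coincides with
`min { M0, sup_{l>0} H(x, l•p, l•A) }` computed in the extended reals, and is a genuine
real number even when `sup_{l>0} H(x, l•p, l•A) = +∞`.) -/
def hbar {N : ℕ}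
    (H : EuclideanSpace ℝ (Fin N) → EuclideanSpace ℝ (Fin N) →
      Matrix (Fin N) (Fin N) ℝ → ℝ)
    (M0 : ℝ) (x p : EuclideanSpace ℝ (Fin N)) (A : Matrix (Fin N) (Fin N) ℝ) : ℝ :=
  ⨆ l : {l : ℝ // 0 < l}, min M0 (H x (l.1 • p) (l.1 • A))

/-- `w` belongs to `Lip_{M0}(closure θ)` and satisfies `w + H̄(x, Dw, D²w) ≤ 0` on `θ`
in the viscosity sense, where `H̄(x,p,A) = min { M0, sup_{l>0} H(x, l•p, l•A) }`. -/
def SubSolFam {N : ℕ} (θ : Set (EuclideanSpace ℝ (Fin N)))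
    (H : EuclideanSpace ℝ (Fin N) → EuclideanSpace ℝ (Fin N) →
      Matrix (Fin N) (Fin N) ℝ → ℝ)
    (M0 : ℝ) (w : EuclideanSpace ℝ (Fin N) → ℝ) : Prop :=
  (∀ z ∈ closure θ, |w z| ≤ M0) ∧
  (∀ z ∈ closure θ, ∀ z' ∈ closure θ, |w z - w z'| ≤ M0 * ‖z - z'‖) ∧
  (∀ z ∈ θ, ∀ φ : EuclideanSpace ℝ (Fin N) → ℝ, ContDiff ℝ 2 φ →
    IsLocalMaxOn (fun y => w y - φ y) θ z →
    w z + hbar H M0 z (gradient φ z) (hessMat φ z) ≤ 0)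

lemma gradient_add_const_mul {N : ℕ} {f g : EuclideanSpace ℝ (Fin N) → ℝ}
    (hf : ContDiff ℝ 2 f) (hg : ContDiff ℝ 2 g) (ε : ℝ) (x : EuclideanSpace ℝ (Fin N)) :
    gradient (fun y => f y + ε * g y) x = gradient f x + ε • gradient g x := by
  have h1 := (hf.differentiable (by norm_num) x).hasFDerivAt
  have h2 := (hg.differentiable (by norm_num) x).hasFDerivAt
  have h3 := (h1.add (h2.const_mul ε)).fderiv
  unfold gradient
  change fderiv ℝ (fun y => f y + ε * g y) x = _ at h3
  rw [h3, map_add, LinearIsometryEquiv.map_smul]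

lemma hessMat_add_const_mul {N : ℕ} {f g : EuclideanSpace ℝ (Fin N) → ℝ}
    (hf : ContDiff ℝ 2 f) (hg : ContDiff ℝ 2 g) (ε : ℝ) (x : EuclideanSpace ℝ (Fin N)) :
    hessMat (fun y => f y + ε * g y) x = hessMat f x + ε • hessMat g x := by
  have h : iteratedFDeriv ℝ 2 (f + ε • g) x
      = iteratedFDeriv ℝ 2 f x + ε • iteratedFDeriv ℝ 2 g x := by
    have hεg : ContDiff ℝ 2 (ε • g) := hg.const_smul ε
    rw [iteratedFDeriv_add_apply hf.contDiffAt hεg.contDiffAt,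
      iteratedFDeriv_const_smul_apply hg.contDiffAt]
  ext i j
  change iteratedFDeriv ℝ 2 (f + ε • g) x _ = _
  rw [h]
  rfl

lemma continuous_gradient {N : ℕ} {f : EuclideanSpace ℝ (Fin N) → ℝ}
    (hf : ContDiff ℝ 2 f) : Continuous (gradient f) :=
  (LinearIsometryEquiv.continuous _).comp (hf.continuous_fderiv (by norm_num))

lemma continuous_hessMat {N : ℕ} {f : EuclideanSpace ℝ (Fin N) → ℝ}
    (hf : ContDiff ℝ 2 f) : Continuous (hessMat f) := by
  refine continuous_pi fun i => continuous_pi fun j => ?_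
  have h := hf.continuous_iteratedFDeriv (m := 2) le_rfl
  exact (ContinuousEval.continuous_eval.comp (h.prodMk continuous_const))

/-- Each member of the family defining `hbar` is at most `hbar`; the truncation at `M0` is what
makes the supremum a genuine one. -/
lemma min_le_hbar {N : ℕ}
    (H : EuclideanSpace ℝ (Fin N) → EuclideanSpace ℝ (Fin N) →
      Matrix (Fin N) (Fin N) ℝ → ℝ)
    (M0 : ℝ) (x p : EuclideanSpace ℝ (Fin N)) (A : Matrix (Fin N) (Fin N) ℝ)
    (l : {l : ℝ // 0 < l}) :
    min M0 (H x (l.1 • p) (l.1 • A)) ≤ hbar H M0 x p A := by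
  refine le_ciSup (f := fun l : {l : ℝ // 0 < l} => min M0 (H x (l.1 • p) (l.1 • A))) ?_ l
  exact ⟨M0, by rintro _ ⟨k, rfl⟩; exact min_le_left _ _⟩

/-- If `w ≤ W` nearly touches `W` at `z`, where `W - φ` is maximal over a closed ball, then
`w - φ - ε ‖· - z‖²` attains its maximum over that ball within distance `√ε` of `z`. -/
lemma exists_perturbed_max {N : ℕ} {z : EuclideanSpace ℝ (Fin N)} {r ε : ℝ}
    {w W φ : EuclideanSpace ℝ (Fin N) → ℝ} (hr : 0 < r) (hε : 0 < ε)
    (hw : ContinuousOn w (Metric.closedBall z r)) (hφ : Continuous φ)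
    (hle : ∀ y ∈ Metric.closedBall z r, w y ≤ W y)
    (hmax : ∀ y ∈ Metric.closedBall z r, W y - φ y ≤ W z - φ z)
    (hclose : W z - ε ^ 2 < w z) :
    ∃ y ∈ Metric.closedBall z r, ‖y - z‖ ^ 2 ≤ ε ∧ ∀ u ∈ Metric.closedBall z r,
      w u - (φ u + ε * ‖u - z‖ ^ 2) ≤ w y - (φ y + ε * ‖y - z‖ ^ 2) := by
  have hz : z ∈ Metric.closedBall z r := Metric.mem_closedBall_self hr.le
  obtain ⟨y, hy, hym⟩ := (isCompact_closedBall z r).exists_isMaxOn ⟨z, hz⟩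
    (f := fun u => w u - (φ u + ε * ‖u - z‖ ^ 2))
    (hw.sub (Continuous.continuousOn (by fun_prop)))
  refine ⟨y, hy, ?_, fun u hu => hym hu⟩
  have h1 : w z - (φ z + ε * ‖z - z‖ ^ 2) ≤ w y - (φ y + ε * ‖y - z‖ ^ 2) := hym hz
  have h2 := hle y hy
  have h3 := hmax y hy
  simp only [sub_self, norm_zero] at h1
  have h4 : ε * ‖y - z‖ ^ 2 ≤ ε * ε := by nlinarith
  exact le_of_mul_le_mul_left h4 hε

/- STATEMENT 10: the upper envelope `w̄(x) = sup { w(x) : w ∈ S }` of the nonempty family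
`S` of `Lip_{M0}` viscosity subsolutions of `w + H̄(x,Dw,D²w) ≤ 0` on `θ` is itself a
member of `S`: it is in `Lip_{M0}(closure θ)` and is a viscosity subsolution on `θ`. -/
theorem upper_envelope_subsolution {N : ℕ} (θ : Set (EuclideanSpace ℝ (Fin N)))
    (hθne : θ.Nonempty) (hθopen : IsOpen θ) (hθbdd : Bornology.IsBounded θ)
    (H : EuclideanSpace ℝ (Fin N) → EuclideanSpace ℝ (Fin N) →
      Matrix (Fin N) (Fin N) ℝ → ℝ)
    (hH_cont : ContinuousOn
      (fun q : EuclideanSpace ℝ (Fin N) × EuclideanSpace ℝ (Fin N) ×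
        Matrix (Fin N) (Fin N) ℝ => H q.1 q.2.1 q.2.2)
      (closure θ ×ˢ (univ : Set (EuclideanSpace ℝ (Fin N))) ×ˢ
        (univ : Set (Matrix (Fin N) (Fin N) ℝ))))
    (M0 : ℝ) (hM0 : 0 < M0)
    (hSne : ∃ w : EuclideanSpace ℝ (Fin N) → ℝ, SubSolFam θ H M0 w)
    (wbar : EuclideanSpace ℝ (Fin N) → ℝ)
    (hwbar : ∀ x ∈ closure θ,
      wbar x = sSup {y : ℝ | ∃ w : EuclideanSpace ℝ (Fin N) → ℝ,
        SubSolFam θ H M0 w ∧ y = w x}) :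
    SubSolFam θ H M0 wbar := by
  have hlub : ∀ x ∈ closure θ, IsLUB {y : ℝ | ∃ w : EuclideanSpace ℝ (Fin N) → ℝ,
      SubSolFam θ H M0 w ∧ y = w x} (wbar x) := by
    intro x hx
    rw [hwbar x hx]
    refine isLUB_csSup ?_ ⟨M0, ?_⟩
    · obtain ⟨w, hw⟩ := hSne
      exact ⟨w x, w, hw, rfl⟩
    · rintro _ ⟨w, hw, rfl⟩
      exact (abs_le.1 (hw.1 x hx)).2
  have hle : ∀ w, SubSolFam θ H M0 w → ∀ x ∈ closure θ, w x ≤ wbar x :=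
    fun w hw x hx => (hlub x hx).1 ⟨w, hw, rfl⟩
  have hlip : ∀ z ∈ closure θ, ∀ z' ∈ closure θ, wbar z - wbar z' ≤ M0 * ‖z - z'‖ := by
    intro z hz z' hz'
    have : wbar z ≤ wbar z' + M0 * ‖z - z'‖ := by
      refine (hlub z hz).2 ?_
      rintro _ ⟨w, hw, rfl⟩
      have h1 := (abs_le.1 (hw.2.1 z hz z' hz')).2
      have h2 := hle w hw z' hz'
      linarith
    linarith
  refine ⟨?_, ?_, ?_⟩
  · intro z hz
    refine abs_le.2 ⟨?_, (hlub z hz).2 ?_⟩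
    · obtain ⟨w, hw⟩ := hSne
      exact (abs_le.1 (hw.1 z hz)).1.trans (hle w hw z hz)
    · rintro _ ⟨w, hw, rfl⟩
      exact (abs_le.1 (hw.1 z hz)).2
  · intro z hz z' hz'
    refine abs_le.2 ⟨?_, hlip z hz z' hz'⟩
    have := hlip z' hz' z hz
    rw [norm_sub_rev] at this
    linarith
  intro z hz φ hφ hmax
  have hzc := subset_closure hz
  -- On an open `θ` the local maximum relative to `θ` is one over a full closed ball inside `θ`.
  obtain ⟨r, hr, hball⟩ : ∃ r > 0, Metric.closedBall z r ⊆
      {y | y ∈ θ ∧ wbar y - φ y ≤ wbar z - φ z} := by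
    refine Metric.nhds_basis_closedBall.mem_iff.1 ?_
    have h1 := hθopen.mem_nhds hz
    have h2 : ∀ᶠ y in nhds z, wbar y - φ y ≤ wbar z - φ z := by
      have h3 := hmax
      rw [IsLocalMaxOn, IsMaxFilter, hθopen.nhdsWithin_eq hz] at h3
      exact h3
    exact Filter.inter_mem h1 h2
  set g : EuclideanSpace ℝ (Fin N) → ℝ := fun y => ‖y - z‖ ^ 2 with hgdef
  have hg : ContDiff ℝ 2 g := (contDiff_id.sub contDiff_const).norm_sq ℝ
  have hex : ∀ ε : ℝ, ∃ w y, 0 < ε → SubSolFam θ H M0 w ∧ wbar z - ε ^ 2 < w z ∧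
      y ∈ Metric.closedBall z r ∧ ‖y - z‖ ^ 2 ≤ ε ∧ ∀ u ∈ Metric.closedBall z r,
      w u - (φ u + ε * g u) ≤ w y - (φ y + ε * g y) := by
    intro ε
    by_cases hε : 0 < ε
    · obtain ⟨_, ⟨w, hw, rfl⟩, hlt, -⟩ :=
        (hlub z hzc).exists_between (show wbar z - ε ^ 2 < wbar z by
          have := pow_pos hε 2
          linarith)
      have hcont : ContinuousOn w (closure θ) := by
        have : LipschitzOnWith M0.toNNReal w (closure θ) := by
          refine LipschitzOnWith.of_dist_le_mul fun x hx y hy => ?_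
          rw [Real.dist_eq, dist_eq_norm, Real.coe_toNNReal _ hM0.le]
          exact hw.2.1 x hx y hy
        exact this.continuousOn
      obtain ⟨y, hy⟩ := exists_perturbed_max (W := wbar) hr hε
        (hcont.mono fun u hu => subset_closure (hball hu).1) hφ.continuous
        (fun u hu => hle w hw u (subset_closure (hball hu).1)) (fun u hu => (hball hu).2) hlt
      exact ⟨w, y, fun _ => ⟨hw, hlt, hy⟩⟩
    · exact ⟨0, 0, fun h => absurd h hε⟩
  choose w y hwy using hex
  have hpos : ∀ᶠ ε : ℝ in nhdsWithin 0 (Ioi 0), 0 < ε := self_mem_nhdsWithin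
  have hε0 : Tendsto (fun ε : ℝ => ε) (nhdsWithin 0 (Ioi 0)) (nhds 0) :=
    tendsto_id.mono_left nhdsWithin_le_nhds
  have hnorm : Tendsto (fun ε => ‖y ε - z‖) (nhdsWithin 0 (Ioi 0)) (nhds 0) := by
    have hs : Tendsto (fun ε : ℝ => √ε) (nhdsWithin 0 (Ioi 0)) (nhds 0) := by
      have := (Real.continuous_sqrt.tendsto 0).comp hε0
      rwa [Real.sqrt_zero] at this
    refine squeeze_zero' (Eventually.of_forall fun ε => norm_nonneg _) ?_ hs
    filter_upwards [hpos] with ε hε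
    exact Real.le_sqrt_of_sq_le (hwy ε hε).2.2.2.1
  have hyz : Tendsto y (nhdsWithin 0 (Ioi 0)) (nhds z) :=
    tendsto_iff_norm_sub_tendsto_zero.2 hnorm
  have hwz : Tendsto (fun ε => w ε (y ε)) (nhdsWithin 0 (Ioi 0)) (nhds (wbar z)) := by
    have hb : Tendsto (fun ε => ε ^ 2 + M0 * ‖y ε - z‖) (nhdsWithin 0 (Ioi 0)) (nhds 0) := by
      simpa using (hε0.pow 2).add (hnorm.const_mul M0)
    refine tendsto_iff_norm_sub_tendsto_zero.2
      (squeeze_zero' (Eventually.of_forall fun ε => norm_nonneg _) ?_ hb)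
    filter_upwards [hpos] with ε hε
    obtain ⟨hw, hlt, hy, -, -⟩ := hwy ε hε
    have h1 := abs_le.1 (hw.2.1 (y ε) (subset_closure (hball hy).1) z hzc)
    have h2 := hle _ hw z hzc
    have h3 := sq_nonneg ε
    rw [Real.norm_eq_abs]
    exact abs_le.2 ⟨by linarith [h1.1], by linarith [h1.2]⟩
  have hp : Tendsto (fun ε => gradient φ (y ε) + ε • gradient g (y ε)) (nhdsWithin 0 (Ioi 0))
      (nhds (gradient φ z)) := by
    simpa using (((continuous_gradient hφ).tendsto z).comp hyz).add
      (hε0.smul (((continuous_gradient hg).tendsto z).comp hyz))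
  have hA : Tendsto (fun ε => hessMat φ (y ε) + ε • hessMat g (y ε)) (nhdsWithin 0 (Ioi 0))
      (nhds (hessMat φ z)) := by
    simpa using (((continuous_hessMat hφ).tendsto z).comp hyz).add
      (hε0.smul (((continuous_hessMat hg).tendsto z).comp hyz))
  have hin : ∀ᶠ ε in nhdsWithin 0 (Ioi 0), y ε ∈ Metric.ball z r :=
    hyz.eventually (Metric.ball_mem_nhds z hr)
  have key : ∀ l : {l : ℝ // 0 < l},
      wbar z + min M0 (H z (l.1 • gradient φ z) (l.1 • hessMat φ z)) ≤ 0 := by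
    intro l
    have hHl : Tendsto (fun ε => H (y ε) (l.1 • (gradient φ (y ε) + ε • gradient g (y ε)))
        (l.1 • (hessMat φ (y ε) + ε • hessMat g (y ε)))) (nhdsWithin 0 (Ioi 0))
        (nhds (H z (l.1 • gradient φ z) (l.1 • hessMat φ z))) := by
      have h1 := hH_cont (z, l.1 • gradient φ z, l.1 • hessMat φ z)
        ⟨hzc, mem_univ _, mem_univ _⟩
      refine h1.tendsto.comp (tendsto_nhdsWithin_iff.2
        ⟨hyz.prodMk_nhds ((hp.const_smul l.1).prodMk_nhds (hA.const_smul l.1)), ?_⟩)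
      filter_upwards [hpos] with ε hε
      exact ⟨subset_closure (hball (hwy ε hε).2.2.1).1, mem_univ _, mem_univ _⟩
    refine le_of_tendsto (hwz.add (tendsto_const_nhds.min hHl)) ?_
    filter_upwards [hpos, hin] with ε hε hyε
    obtain ⟨hw, -, hy, -, hym⟩ := hwy ε hε
    have h1 := hw.2.2 (y ε) (hball hy).1 (fun u => φ u + ε * g u)
      (hφ.add (contDiff_const.mul hg)) (by
        refine Filter.Eventually.filter_mono nhdsWithin_le_nhds ?_
        filter_upwards [Metric.isOpen_ball.mem_nhds hyε] with u hu
        exact hym u (Metric.ball_subset_closedBall hu))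
    rw [gradient_add_const_mul hφ hg, hessMat_add_const_mul hφ hg] at h1
    have h2 := min_le_hbar H M0 (y ε) (gradient φ (y ε) + ε • gradient g (y ε))
      (hessMat φ (y ε) + ε • hessMat g (y ε)) l
    linarith
  have : Nonempty {l : ℝ // 0 < l} := ⟨⟨1, one_pos⟩⟩
  have hsup : hbar H M0 z (gradient φ z) (hessMat φ z) ≤ -wbar z :=
    ciSup_le fun l => by linarith [key l]
  linarith
end
end

section
/- Let H : closure(θ) × ℝ^N × S^N → ℝ be continuous, and suppose that for every M ≥ M0 the function w₀ belongs to Lip_M(closure(θ)) and satisfies w₀(x) + min{M, sup_{l>0} H(x, l·Dw₀, l·D²w₀)} ≤ 0 on θ in the viscosity sense (as holds for the limit function w₀ of Theorem 3.4). Then for every x ∈ θ the set { (p,A) ∈ J^{2,+}w₀(x) : sup_{l>0} H(x, l·p, l·A) = +∞ } is empty; i.e., at every interior point, every second-order superjet element (p,A) of w₀ satisfies sup_{l>0} H(x, l·p, l·A) < +∞. -/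
/-!
A superjet element at `x` comes from a `C²` function touching `w0` from above at `x`, so it is an
admissible test function for the viscosity inequality at every level `M ≥ M0`. Since `|w0| ≤ M0`,
the inequality at level `M0 + 1` gives `min (M0 + 1) (sup_l H) ≤ -w0 x ≤ M0`. The truncation is
therefore not active, and `H x (l • p) (l • A) ≤ M0` for all `l > 0`.
-/

noncomputable section
open Set Filter

/-- `(p, A)` belongs to the second-order superjet `J^{2,+} w (x)` (relative to
`closure θ`): there is a `C²` function `φ` with `w - φ ≤ w(x) - φ(x)` on `closure θ`,
`p = Dφ(x)` and `A = D²φ(x)`. -/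
def InSuperJet {N : ℕ} (θ : Set (EuclideanSpace ℝ (Fin N)))
    (w : EuclideanSpace ℝ (Fin N) → ℝ) (x p : EuclideanSpace ℝ (Fin N))
    (A : Matrix (Fin N) (Fin N) ℝ) : Prop :=
  ∃ φ : EuclideanSpace ℝ (Fin N) → ℝ, ContDiff ℝ 2 φ ∧
    (∀ y ∈ closure θ, w y - φ y ≤ w x - φ x) ∧
    p = gradient φ x ∧ A = hessMat φ x

/- STATEMENT 11: if for every `M ≥ M0` the function `w₀` is in `Lip_M(closure θ)` and
satisfies `w₀ + min{M, sup_{l>0} H(x, l·Dw₀, l·D²w₀)} ≤ 0` on `θ` in the viscosity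
sense, then for every `x ∈ θ` and every `(p,A)` in the superjet `J^{2,+}w₀(x)` the
supremum `sup_{l>0} H(x, l•p, l•A)` is finite (the range is bounded above); i.e.
`{(p,A) ∈ J^{2,+}w₀(x) : sup_{l>0} H(x,l•p,l•A) = +∞} = ∅`. -/
theorem superjet_sup_finite {N : ℕ} (θ : Set (EuclideanSpace ℝ (Fin N)))
    (hθne : θ.Nonempty) (hθopen : IsOpen θ) (hθbdd : Bornology.IsBounded θ)
    (H : EuclideanSpace ℝ (Fin N) → EuclideanSpace ℝ (Fin N) →
      Matrix (Fin N) (Fin N) ℝ → ℝ)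
    (hH_cont : ContinuousOn
      (fun q : EuclideanSpace ℝ (Fin N) × EuclideanSpace ℝ (Fin N) ×
        Matrix (Fin N) (Fin N) ℝ => H q.1 q.2.1 q.2.2)
      (closure θ ×ˢ (univ : Set (EuclideanSpace ℝ (Fin N))) ×ˢ
        (univ : Set (Matrix (Fin N) (Fin N) ℝ))))
    (M0 : ℝ) (hM0 : 0 < M0)
    (w0 : EuclideanSpace ℝ (Fin N) → ℝ)
    (hw0 : ∀ M : ℝ, M0 ≤ M →
      (∀ z ∈ closure θ, |w0 z| ≤ M) ∧
      (∀ z ∈ closure θ, ∀ z' ∈ closure θ, |w0 z - w0 z'| ≤ M * ‖z - z'‖) ∧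
      (∀ z ∈ θ, ∀ φ : EuclideanSpace ℝ (Fin N) → ℝ, ContDiff ℝ 2 φ →
        IsLocalMaxOn (fun y => w0 y - φ y) θ z →
        w0 z + hbar H M z (gradient φ z) (hessMat φ z) ≤ 0)) :
    ∀ x ∈ θ, ∀ (p : EuclideanSpace ℝ (Fin N)) (A : Matrix (Fin N) (Fin N) ℝ),
      InSuperJet θ w0 x p A →
      BddAbove (Set.range fun l : {l : ℝ // 0 < l} => H x (l.1 • p) (l.1 • A)) := by
  rintro x hx p A ⟨φ, hφ, hmax, rfl, rfl⟩
  obtain ⟨-, -, hv⟩ := hw0 (M0 + 1) (by linarith)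
  have hloc : IsLocalMaxOn (fun y => w0 y - φ y) θ x :=
    IsMaxOn.localize fun y hy => hmax y (subset_closure hy)
  have hsup := hv x hx φ hφ hloc
  have hx0 := (abs_le.mp ((hw0 M0 le_rfl).1 x (subset_closure hx))).1
  refine ⟨M0, ?_⟩
  rintro _ ⟨l, rfl⟩
  -- The truncation makes the real supremum in `hbar` genuine, so it dominates each term.
  have hle : min (M0 + 1) (H x (l.1 • gradient φ x) (l.1 • hessMat φ x)) ≤
      hbar H (M0 + 1) x (gradient φ x) (hessMat φ x) :=
    le_ciSup (f := fun l : {l : ℝ // 0 < l} =>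
      min (M0 + 1) (H x (l.1 • gradient φ x) (l.1 • hessMat φ x)))
      ⟨M0 + 1, by rintro _ ⟨k, rfl⟩; exact min_le_left _ _⟩ l
  -- The left entry of the minimum exceeds `-w0 x ≤ M0`, so `H` attains the minimum.
  rcases min_le_iff.mp (hle.trans (by linarith : _ ≤ M0)) with h | h
  · linarith
  · exact h
end
end

section
/- Let K ⊂ ℝ^N be nonempty and compact, let u : K → ℝ be upper semicontinuous and v : K → ℝ be lower semicontinuous. For each ε > 0 let (x_ε, x'_ε) ∈ K × K be a maximum point of Φ_ε(x,x') := u(x) − v(x') − (1/(2ε))·|x−x'|² over K × K. Then there exist a sequence ε_n ↓ 0 and a point x̂ ∈ K such that x_{ε_n} → x̂, x'_{ε_n} → x̂, |x_{ε_n} − x'_{ε_n}|²/(2ε_n) → 0, and u(x̂) − v(x̂) = max_{x∈K} (u(x) − v(x)). -/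
open Filter

/-!
Compactness of `K × K` gives a sequence `ε n ↓ 0` along which the maximizers converge to some pair
`(a, b)`. Comparing with a diagonal competitor `(y, y)` shows that
`u y - v y + p n ≤ u (x n) - v (x' n)`, where `p n` is the penalization term. Since `u` is bounded
above and `v` below, `p n` is bounded, hence `‖x n - x' n‖² = 2 (ε n) (p n) → 0` and `a = b`.
Semicontinuity at `a` then bounds the right-hand side by `u a - v a + δ` eventually, for every
`δ > 0`; taking `y` arbitrary gives maximality of `a`, and `y = a` gives `p n → 0`.
-/

/- STATEMENT 14: doubling-of-variables lemma. If `(x_ε, x'_ε)` maximizes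
`Φ_ε(x,x') = u(x) - v(x') - |x-x'|²/(2ε)` over `K × K`, then along a sequence `ε_n ↓ 0`
both points converge to a common point `x̂ ∈ K`, the penalization term tends to `0`,
and `x̂` is a maximum point of `u - v` over `K`. -/
theorem doubling_of_variables {N : ℕ} (K : Set (EuclideanSpace ℝ (Fin N)))
    (hK : IsCompact K) (hKne : K.Nonempty)
    (u v : EuclideanSpace ℝ (Fin N) → ℝ)
    (hu : UpperSemicontinuousOn u K) (hv : LowerSemicontinuousOn v K)
    (xe xe' : ℝ → EuclideanSpace ℝ (Fin N))
    (hxeK : ∀ ε : ℝ, 0 < ε → xe ε ∈ K ∧ xe' ε ∈ K)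
    (hmax : ∀ ε : ℝ, 0 < ε → ∀ y ∈ K, ∀ y' ∈ K,
      u y - v y' - 1 / (2 * ε) * ‖y - y'‖ ^ 2 ≤
        u (xe ε) - v (xe' ε) - 1 / (2 * ε) * ‖xe ε - xe' ε‖ ^ 2) :
    ∃ (en : ℕ → ℝ) (xhat : EuclideanSpace ℝ (Fin N)),
      (∀ n, 0 < en n) ∧ StrictAnti en ∧ Tendsto en atTop (nhds 0) ∧
      xhat ∈ K ∧
      Tendsto (fun n => xe (en n)) atTop (nhds xhat) ∧
      Tendsto (fun n => xe' (en n)) atTop (nhds xhat) ∧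
      Tendsto (fun n => ‖xe (en n) - xe' (en n)‖ ^ 2 / (2 * en n)) atTop (nhds 0) ∧
      IsMaxOn (fun y => u y - v y) K xhat := by
  have hpos : ∀ n : ℕ, (0 : ℝ) < 1 / ((n : ℝ) + 1) := fun n => Nat.one_div_pos_of_nat
  obtain ⟨⟨a, b⟩, hab, φ, hφ, hlim⟩ := (hK.prod hK).tendsto_subseq
    (x := fun n : ℕ => (xe (1 / ((n : ℝ) + 1)), xe' (1 / ((n : ℝ) + 1))))
    (fun n => hxeK _ (hpos n))
  obtain ⟨en, hen⟩ : ∃ en : ℕ → ℝ, en = fun n => 1 / ((φ n : ℝ) + 1) := ⟨_, rfl⟩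
  have hen_pos : ∀ n, 0 < en n := fun n => hen ▸ hpos (φ n)
  have hen_anti : StrictAnti en := by
    intro m n hmn
    rw [hen]
    exact Nat.one_div_lt_one_div (hφ hmn)
  have hen_lim : Tendsto en atTop (nhds 0) := by
    rw [hen]
    exact tendsto_one_div_add_atTop_nhds_zero_nat.comp hφ.tendsto_atTop
  have hx : Tendsto (fun n => xe (en n)) atTop (nhds a) := by
    rw [hen]
    exact (continuous_fst.tendsto _).comp hlim
  have hx' : Tendsto (fun n => xe' (en n)) atTop (nhds b) := by
    rw [hen]
    exact (continuous_snd.tendsto _).comp hlim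
  obtain ⟨haK, hbK⟩ : a ∈ K ∧ b ∈ K := hab
  obtain ⟨p, hp⟩ : ∃ p : ℕ → ℝ, p = fun n => ‖xe (en n) - xe' (en n)‖ ^ 2 / (2 * en n) := ⟨_, rfl⟩
  have hp_nonneg : ∀ n, 0 ≤ p n := by
    intro n
    have := hen_pos n
    rw [hp]
    positivity
  have hdiag : ∀ n, ∀ y ∈ K, u y - v y + p n ≤ u (xe (en n)) - v (xe' (en n)) := by
    intro n y hy
    have h := hmax (en n) (hen_pos n) y hy y hy
    have h2 : p n = 1 / (2 * en n) * ‖xe (en n) - xe' (en n)‖ ^ 2 := by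
      rw [hp]
      ring
    rw [sub_self, norm_zero] at h
    rw [h2]
    linarith
  obtain ⟨yu, -, hyu⟩ := hu.exists_isMaxOn hKne hK
  obtain ⟨yv, -, hyv⟩ := hv.exists_isMinOn hKne hK
  obtain ⟨C, hC⟩ : ∃ C, ∀ n, p n ≤ C := by
    refine ⟨u yu - v yv - (u a - v a), fun n => ?_⟩
    have h1 := hdiag n a haK
    have h2 : u (xe (en n)) ≤ u yu := hyu (hxeK _ (hen_pos n)).1
    have h3 : v yv ≤ v (xe' (en n)) := hyv (hxeK _ (hen_pos n)).2
    linarith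
  have hsq : Tendsto (fun n => ‖xe (en n) - xe' (en n)‖ ^ 2) atTop (nhds 0) := by
    have hub : Tendsto (fun n => 2 * en n * C) atTop (nhds 0) := by
      simpa using (hen_lim.const_mul 2).mul_const C
    refine squeeze_zero (fun n => by positivity) (fun n => ?_) hub
    have h0 := hen_pos n
    have h1 : ‖xe (en n) - xe' (en n)‖ ^ 2 = 2 * en n * p n := by
      rw [hp]
      field_simp
    rw [h1]
    exact mul_le_mul_of_nonneg_left (hC n) (by positivity)
  obtain rfl : a = b := by
    have h := tendsto_nhds_unique hsq ((hx.sub hx').norm.pow 2)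
    have h2 : ‖a - b‖ = 0 := by
      simpa using h.symm
    exact sub_eq_zero.1 (norm_eq_zero.1 h2)
  have hkey : ∀ δ : ℝ, 0 < δ → ∀ᶠ n in atTop, ∀ y ∈ K, u y - v y + p n < u a - v a + δ := by
    intro δ hδ
    have hxW : Tendsto (fun n => xe (en n)) atTop (nhdsWithin a K) :=
      tendsto_nhdsWithin_iff.2 ⟨hx, Eventually.of_forall fun n => (hxeK _ (hen_pos n)).1⟩
    have hxW' : Tendsto (fun n => xe' (en n)) atTop (nhdsWithin a K) :=
      tendsto_nhdsWithin_iff.2 ⟨hx', Eventually.of_forall fun n => (hxeK _ (hen_pos n)).2⟩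
    filter_upwards [hxW.eventually (hu a haK (u a + δ / 2) (by linarith)),
      hxW'.eventually (hv a haK (v a - δ / 2) (by linarith))] with n h1 h2 y hy
    have := hdiag n y hy
    linarith
  refine ⟨en, a, hen_pos, hen_anti, hen_lim, haK, hx, hx', ?_, ?_⟩
  · rw [← hp]
    refine tendsto_order.2 ⟨fun c hc => Eventually.of_forall fun n => hc.trans_le (hp_nonneg n),
      fun c hc => ?_⟩
    filter_upwards [hkey c hc] with n hn
    have := hn a haK
    linarith
  · intro y hy
    change u y - v y ≤ u a - v a
    refine le_of_forall_pos_le_add fun δ hδ => ?_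
    obtain ⟨n, hn⟩ := (hkey δ hδ).exists
    have h1 := hn y hy
    have h2 := hp_nonneg n
    linarith
end

section
/- Let ψ : ℝ^N × ℝ^d × U → ℝ satisfy (H2) and (H6). Then there exist a sequence λ_n ↓ 0 and a function ψ̃ : ℝ^d × U → ℝ such that λ_n·ψ(x, z/λ_n, u) → ψ̃(z,u) as n → ∞, uniformly for (x,z,u) in compact subsets of closure(θ) × ℝ^d × U; in particular the limit is independent of x. Moreover ψ̃ satisfies |ψ̃(z,u)| ≤ K_z·|z| and |ψ̃(z,u) − ψ̃(z',u')| ≤ K_z·|z−z'| + |z|·ρ(d_U(u,u')) for all z, z' ∈ ℝ^d and u, u' ∈ U. -/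
/-!
With `lam n = 1 / (n + 1)` and a fixed base point `x₀`, the functions
`f n (z, u) = lam n * ψ x₀ (z / lam n) u` satisfy `|f n (z, u)| ≤ lam n * M + Kz ‖z‖` and
`|f n (z, u) - f n (z', u')| ≤ Kz ‖z - z'‖ + (lam n + ‖z‖) ρ (dist u u')`: rescaling preserves the
Lipschitz constant in `z` and turns the factor `1 + ‖z‖` of the modulus in `u` into `lam n + ‖z‖`.
They are thus pointwise bounded and equicontinuous on the σ-compact locally compact space
`ℝ^d × U`, and the Arzelà–Ascoli theorem (`exists_subseq_tendsto_of_modulus`) gives a subsequence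
that converges uniformly on compact sets. Replacing `x₀` by `x` costs at most
`lam n * Kx * ‖x - x₀‖`, which vanishes uniformly on bounded sets, so the limit does not depend
on `x`. Passing to the limit in the estimates above, where `lam n` drops out, gives the bounds
on the limit.
-/

noncomputable section
open Set Filter

open Topology

/-- **Arzelà–Ascoli**, sequential form: a pointwise bounded sequence of functions with a common
modulus `w` at every point has a subsequence converging in the compact-open topology. -/
lemma exists_subseq_tendsto_of_modulus {Y : Type*} [TopologicalSpace Y] [SigmaCompactSpace Y]
    [WeaklyLocallyCompactSpace Y] (f : ℕ → C(Y, ℝ)) (b : Y → ℝ) (w : Y → Y → ℝ)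
    (hw : ∀ y, Tendsto (w y) (𝓝 y) (𝓝 0)) (hb : ∀ n y, |f n y| ≤ b y)
    (hfw : ∀ n y y', |f n y - f n y'| ≤ w y y') :
    ∃ (g : C(Y, ℝ)) (φ : ℕ → ℕ), StrictMono φ ∧ Tendsto (f ∘ φ) atTop (𝓝 g) := by
  -- The set cut out by the two pointwise estimates is closed in the product topology.
  let S : Set C(Y, ℝ) := {g | (∀ y, |g y| ≤ b y) ∧ ∀ y y', |g y - g y'| ≤ w y y'}
  have himage : ContinuousMap.toFun '' S =
      (univ.pi fun y => Icc (-b y) (b y)) ∩ {g : Y → ℝ | ∀ y y', |g y - g y'| ≤ w y y'} := by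
    ext g
    constructor
    · rintro ⟨g, ⟨h1, h2⟩, rfl⟩
      exact ⟨fun y _ => abs_le.mp (h1 y), h2⟩
    · rintro ⟨h1, h2⟩
      have hg : Continuous g := by
        rw [continuous_iff_continuousAt]
        intro y
        rw [ContinuousAt, tendsto_iff_dist_tendsto_zero]
        refine squeeze_zero (fun _ => dist_nonneg) (fun y' => ?_) (hw y)
        rw [dist_comm]
        exact h2 y y'
      exact ⟨⟨g, hg⟩, ⟨fun y => abs_le.mpr (h1 y (mem_univ y)), h2⟩, rfl⟩
  have hcompact : IsCompact S := by
    apply ArzelaAscoli.isCompact_of_equicontinuous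
    · rw [himage]
      refine (isCompact_univ_pi fun y => isCompact_Icc).inter_right ?_
      simp only [ofPred_forall]
      refine isClosed_iInter fun y => isClosed_iInter fun y' => ?_
      exact isClosed_le (by fun_prop) continuous_const
    · intro y
      exact Metric.equicontinuousAt_of_continuity_modulus (w y) (hw y) _
        (Eventually.of_forall fun y' g => g.2.2 y y')
  obtain ⟨g, -, φ, hφ, hlim⟩ := hcompact.tendsto_subseq (x := f) fun n => ⟨hb n, hfw n⟩
  exact ⟨g, φ, hφ, hlim⟩

/- STATEMENT 17: under (H2) and (H6), there are a sequence `λ_n ↓ 0` and a function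
`ψ̃ : ℝ^d × U → ℝ` such that `λ_n · ψ(x, z/λ_n, u) → ψ̃(z,u)` uniformly on compact
subsets of `closure θ × ℝ^d × U` (so the limit does not depend on `x`), with
`|ψ̃(z,u)| ≤ K_z |z|` and `|ψ̃(z,u) - ψ̃(z',u')| ≤ K_z |z-z'| + |z| ρ(d(u,u'))`. -/
theorem rescaled_psi_limit {N d : ℕ} {U : Type}
    [MetricSpace U] [CompactSpace U] [Nonempty U]
    (θ : Set (EuclideanSpace ℝ (Fin N)))
    (hθne : θ.Nonempty) (hθopen : IsOpen θ) (hθbdd : Bornology.IsBounded θ)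
    (ψ : EuclideanSpace ℝ (Fin N) → EuclideanSpace ℝ (Fin d) → U → ℝ)
    (Kx Kz M : ℝ) (hKx : 0 ≤ Kx) (hKz : 0 ≤ Kz) (hM : 0 ≤ M)
    (hψ_cont : Continuous fun q :
      EuclideanSpace ℝ (Fin N) × EuclideanSpace ℝ (Fin d) × U => ψ q.1 q.2.1 q.2.2)
    (hψ_lip : ∀ x x' z z' u, |ψ x z u - ψ x' z' u| ≤ Kx * ‖x - x'‖ + Kz * ‖z - z'‖)
    (hψ_bd : ∀ x u, |ψ x 0 u| ≤ M)
    (ρ : ℝ → ℝ) (hρ_nonneg : ∀ s : ℝ, 0 ≤ s → 0 ≤ ρ s)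
    (hρ_concave : ConcaveOn ℝ (Ici 0) ρ) (hρ_mono : MonotoneOn ρ (Ici 0))
    (hρ0 : Tendsto ρ (nhdsWithin 0 (Ioi 0)) (nhds 0))
    (hψ_u : ∀ (x : EuclideanSpace ℝ (Fin N)) (z : EuclideanSpace ℝ (Fin d)) (u u' : U),
      |ψ x z u - ψ x z u'| ≤ (1 + ‖z‖) * ρ (dist u u')) :
    ∃ (lamn : ℕ → ℝ) (ψt : EuclideanSpace ℝ (Fin d) → U → ℝ),
      (∀ n, 0 < lamn n) ∧ StrictAnti lamn ∧ Tendsto lamn atTop (nhds 0) ∧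
      (∀ K : Set (EuclideanSpace ℝ (Fin N) × EuclideanSpace ℝ (Fin d) × U),
        IsCompact K →
        K ⊆ closure θ ×ˢ (univ : Set (EuclideanSpace ℝ (Fin d))) ×ˢ (univ : Set U) →
        TendstoUniformlyOn
          (fun n q => lamn n * ψ q.1 ((lamn n)⁻¹ • q.2.1) q.2.2)
          (fun q => ψt q.2.1 q.2.2) atTop K) ∧
      (∀ (z : EuclideanSpace ℝ (Fin d)) (u : U), |ψt z u| ≤ Kz * ‖z‖) ∧
      (∀ (z z' : EuclideanSpace ℝ (Fin d)) (u u' : U),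
        |ψt z u - ψt z' u'| ≤ Kz * ‖z - z'‖ + ‖z‖ * ρ (dist u u')) := by
  have hρ_zero : ρ 0 = 0 := by
    refine le_antisymm (ge_of_tendsto hρ0 ?_) (hρ_nonneg 0 le_rfl)
    filter_upwards [self_mem_nhdsWithin] with s hs
    exact hρ_mono self_mem_Ici (mem_Ici.mpr (mem_Ioi.mp hs).le) (mem_Ioi.mp hs).le
  have hρ_lim : Tendsto ρ (𝓝[≥] 0) (𝓝 0) := by
    have h : insert (0 : ℝ) (Ioi 0) = Ici 0 := Ioi_insert
    rw [← h, nhdsWithin_insert, tendsto_sup]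
    exact ⟨by simpa [hρ_zero] using tendsto_pure_nhds ρ 0, hρ0⟩
  obtain ⟨x₀, -⟩ := hθne
  have hscale_z : ∀ l : ℝ, 0 < l → ∀ (x x' : EuclideanSpace ℝ (Fin N))
      (z z' : EuclideanSpace ℝ (Fin d)) (u : U),
      |l * ψ x (l⁻¹ • z) u - l * ψ x' (l⁻¹ • z') u| ≤ l * Kx * ‖x - x'‖ + Kz * ‖z - z'‖ := by
    intro l hl x x' z z' u
    rw [← mul_sub, abs_mul, abs_of_pos hl]
    refine (mul_le_mul_of_nonneg_left (hψ_lip x x' (l⁻¹ • z) (l⁻¹ • z') u) hl.le).trans_eq ?_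
    rw [← smul_sub, norm_smul, Real.norm_of_nonneg (inv_pos.mpr hl).le]
    field_simp
  have hscale_u : ∀ l : ℝ, 0 < l → ∀ (x : EuclideanSpace ℝ (Fin N))
      (z : EuclideanSpace ℝ (Fin d)) (u u' : U),
      |l * ψ x (l⁻¹ • z) u - l * ψ x (l⁻¹ • z) u'| ≤ (l + ‖z‖) * ρ (dist u u') := by
    intro l hl x z u u'
    rw [← mul_sub, abs_mul, abs_of_pos hl]
    refine (mul_le_mul_of_nonneg_left (hψ_u x (l⁻¹ • z) u u') hl.le).trans_eq ?_
    rw [norm_smul, Real.norm_of_nonneg (inv_pos.mpr hl).le]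
    field_simp
  have hscale_mod : ∀ l : ℝ, 0 < l → ∀ (z z' : EuclideanSpace ℝ (Fin d)) (u u' : U),
      |l * ψ x₀ (l⁻¹ • z) u - l * ψ x₀ (l⁻¹ • z') u'|
        ≤ Kz * ‖z - z'‖ + (l + ‖z‖) * ρ (dist u u') := by
    intro l hl z z' u u'
    have h1 := hscale_u l hl x₀ z u u'
    have h2 := hscale_z l hl x₀ x₀ z z' u'
    rw [sub_self, norm_zero, mul_zero, zero_add] at h2
    refine (abs_sub_le _ (l * ψ x₀ (l⁻¹ • z) u') _).trans ?_
    linarith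
  have hscale_bd : ∀ l : ℝ, 0 < l → ∀ (z : EuclideanSpace ℝ (Fin d)) (u : U),
      |l * ψ x₀ (l⁻¹ • z) u| ≤ l * M + Kz * ‖z‖ := by
    intro l hl z u
    have h1 := hscale_z l hl x₀ x₀ z 0 u
    have h2 := mul_le_mul_of_nonneg_left (hψ_bd x₀ u) hl.le
    simp only [sub_self, norm_zero, mul_zero, zero_add, smul_zero, sub_zero] at h1
    have h3 := abs_sub_abs_le_abs_sub (l * ψ x₀ (l⁻¹ • z) u) (l * ψ x₀ 0 u)
    rw [abs_mul l (ψ x₀ 0 u), abs_of_pos hl] at h3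
    linarith
  let lam : ℕ → ℝ := fun n => 1 / ((n : ℝ) + 1)
  have hlam_pos : ∀ n, 0 < lam n := fun n => Nat.one_div_pos_of_nat
  have hlam_anti : StrictAnti lam := fun m n h => Nat.one_div_lt_one_div h
  have hlam_le : ∀ n, lam n ≤ 1 := fun n => by
    have h := hlam_anti.antitone (Nat.zero_le n)
    simpa [lam] using h
  have hlam_lim : Tendsto lam atTop (𝓝 0) := tendsto_one_div_add_atTop_nhds_zero_nat
  let f : ℕ → C(EuclideanSpace ℝ (Fin d) × U, ℝ) := fun n =>
    ⟨fun y => lam n * ψ x₀ ((lam n)⁻¹ • y.1) y.2, by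
      have h : Continuous fun y : EuclideanSpace ℝ (Fin d) × U =>
          (x₀, (lam n)⁻¹ • y.1, y.2) := by fun_prop
      exact continuous_const.mul (hψ_cont.comp h)⟩
  obtain ⟨g, φ, hφ, hlim⟩ := exists_subseq_tendsto_of_modulus f
    (fun y => M + Kz * ‖y.1‖)
    (fun y y' => Kz * ‖y.1 - y'.1‖ + (1 + ‖y.1‖) * ρ (dist y.2 y'.2))
    (by
      rintro ⟨z, u⟩
      have h1 : Tendsto (fun y' : EuclideanSpace ℝ (Fin d) × U => Kz * ‖z - y'.1‖)
          (𝓝 (z, u)) (𝓝 0) := by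
        have h : Continuous fun y' : EuclideanSpace ℝ (Fin d) × U => Kz * ‖z - y'.1‖ := by
          fun_prop
        simpa using h.tendsto (z, u)
      have h2 : Tendsto (fun y' : EuclideanSpace ℝ (Fin d) × U => dist u y'.2)
          (𝓝 (z, u)) (𝓝[≥] 0) := by
        refine tendsto_nhdsWithin_iff.mpr ⟨?_, Eventually.of_forall fun _ => dist_nonneg⟩
        have h : Continuous fun y' : EuclideanSpace ℝ (Fin d) × U => dist u y'.2 := by
          fun_prop
        simpa using h.tendsto (z, u)
      simpa using h1.add ((hρ_lim.comp h2).const_mul (1 + ‖z‖)))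
    (by
      intro n y
      have h1 := hscale_bd (lam n) (hlam_pos n) y.1 y.2
      have h2 := mul_le_mul_of_nonneg_right (hlam_le n) hM
      change |lam n * ψ x₀ ((lam n)⁻¹ • y.1) y.2| ≤ _
      linarith)
    (by
      intro n y y'
      refine (hscale_mod (lam n) (hlam_pos n) y.1 y'.1 y.2 y'.2).trans ?_
      have h := mul_le_mul_of_nonneg_right (hlam_le n) (hρ_nonneg (dist y.2 y'.2) dist_nonneg)
      linarith)
  have hlamφ : Tendsto (fun n => lam (φ n)) atTop (𝓝 0) := hlam_lim.comp hφ.tendsto_atTop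
  have hpt : ∀ z u, Tendsto (fun n => lam (φ n) * ψ x₀ ((lam (φ n))⁻¹ • z) u) atTop
      (𝓝 (g (z, u))) := fun z u =>
    ((continuous_eval_const (z, u)).tendsto g).comp hlim
  refine ⟨fun n => lam (φ n), fun z u => g (z, u), fun n => hlam_pos _,
    hlam_anti.comp_strictMono hφ, hlamφ, ?_, ?_, ?_⟩
  · intro K hK _
    have hunif := ContinuousMap.tendsto_iff_forall_isCompact_tendstoUniformlyOn.mp hlim
      (Prod.snd '' K) (hK.image continuous_snd)
    obtain ⟨C, hC⟩ := hK.exists_bound_of_continuousOn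
      (f := fun q : EuclideanSpace ℝ (Fin N) × EuclideanSpace ℝ (Fin d) × U => q.1 - x₀)
      (by fun_prop)
    rw [Metric.tendstoUniformlyOn_iff] at hunif ⊢
    intro ε hε
    have hsmall : Tendsto (fun n => lam (φ n) * Kx * C) atTop (𝓝 0) := by
      simpa using (hlamφ.mul_const Kx).mul_const C
    filter_upwards [hunif (ε / 2) (half_pos hε), hsmall.eventually_lt_const (half_pos hε)]
      with n hn1 hn2 q hq
    have h1 : dist (g q.2) (lam (φ n) * ψ x₀ ((lam (φ n))⁻¹ • q.2.1) q.2.2) < ε / 2 :=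
      hn1 q.2 (mem_image_of_mem _ hq)
    have h2 := hscale_z (lam (φ n)) (hlam_pos _) x₀ q.1 q.2.1 q.2.1 q.2.2
    rw [sub_self, norm_zero, mul_zero, add_zero, norm_sub_rev, ← Real.dist_eq] at h2
    have h3 := mul_le_mul_of_nonneg_left (hC q hq) (mul_nonneg (hlam_pos (φ n)).le hKx)
    refine (dist_triangle _ (lam (φ n) * ψ x₀ ((lam (φ n))⁻¹ • q.2.1) q.2.2) _).trans_lt ?_
    change dist (g q.2) _ + _ < ε
    linarith
  · intro z u
    have hR : Tendsto (fun n => lam (φ n) * M + Kz * ‖z‖) atTop (𝓝 (Kz * ‖z‖)) := by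
      simpa using (hlamφ.mul_const M).add_const (Kz * ‖z‖)
    exact le_of_tendsto_of_tendsto' (hpt z u).abs hR fun n => hscale_bd _ (hlam_pos _) z u
  · intro z z' u u'
    have hR : Tendsto (fun n => Kz * ‖z - z'‖ + (lam (φ n) + ‖z‖) * ρ (dist u u')) atTop
        (𝓝 (Kz * ‖z - z'‖ + ‖z‖ * ρ (dist u u'))) := by
      simpa using ((hlamφ.add_const ‖z‖).mul_const (ρ (dist u u'))).const_add (Kz * ‖z - z'‖)
    exact le_of_tendsto_of_tendsto' ((hpt z u).sub (hpt z' u')).abs hR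
      fun n => hscale_mod _ (hlam_pos _) z z' u u'
end
end
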